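/- arXiv:2204.04759 — 4 statements merged into one kernel-verified Lean document; each statement's English description precedes it below -/
import Mathlib

section
/- Let Ω ∈ F_k be a word that is not a proper power, whose canonical reduced form Ω = x_{k_t}^{ε_t}⋯x_{k_1}^{ε_1} satisfies k_1 ≠ k_t. For each n, let σ_{1,n}, …, σ_{k,n} be independent random permutations of {1,…,n}, each with conjugation-invariant distribution, such that for every j ∈ {1,…,k}, every p ≥ 1 and all c_1,…,c_p ∈ ℕ*, limsup_{n→∞} E(∏_{i=1}^p #_{c_i}(σ_{j,n})) < ∞. Then for every Young diagram μ: lim_{n→∞} n^{ℓ(μ)} · P(Ω(σ_{1,n},…,σ_{k,n}) ∈ A^{μ}) = 1; equivalently, P(Ω(σ_{1,n},…,σ_{k,n}) ∈ A^{μ}) = P(Ω(ρ_{1,n},…,ρ_{k,n}) ∈ A^{μ})·(1+o(1)) where the ρ_{j,n} are independent uniform permutations. -/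
/-! The proof counts trajectories. Averaging over all choices of `m` distinct points, which conjugation
invariance allows, `n.descFactorial m` times the probability equals the expected number of closed
trajectories: maps `f : (Σ i, ZMod (μ i)) × ZMod t → Fin n` that record every intermediate point when
the word, of length `t`, is applied letter by letter around the `m` cycles, and whose points at the
beginnings of the word are distinct (`descFactorial_mul_prob`). By independence the probability that
a given `f` occurs is a product over the letters `j` of the probabilities `extProb (p j) R` that
`σ_j` maps `a` to `b` for all `(a, b)` in a set `R` of pairs, the edges of `f` labelled `j`.

Two estimates on `extProb` are needed. By conjugation invariance a pair with a new end contributes a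
factor of order `1 / n`; when no such pair is left, the remaining pairs form cycles, and the moment
hypothesis bounds the probability that prescribed points lie in short cycles. Hence
`extProb (p j) R = O(n ^ (-R.card))` (`exists_extProb_le`), and `extProb (p j) R` is asymptotic to
`n ^ (-R.card)` when `R` is a union of paths (`exists_extProb_peelable`).

If `f` is injective, the edges of each letter form paths, because the extremal letters of the word
differ (`peelable_edges`). So each of the `n.descFactorial T` injective maps, `T` being the number of
positions, has weight asymptotic to `n ^ (-T)`, and their total weight tends to `1`.

If `f` is not injective, its graph has more edges than vertices (`card_image_lt_card_edges`).
Indeed every vertex has degree at least two since the word is cyclically reduced. If all degrees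
were two, then two positions visiting the same vertex would read the same letters forever, or
mutually inverse letters in opposite directions. The second is impossible for a cyclically reduced
word; in the first the two positions differ by a multiple of the length of the word, as the word is
not a proper power, hence coincide because the points at the beginnings of the word are distinct.
There are `O(n ^ v)` maps with `v` values and each has weight `O(n ^ (-(v + 1)))`, so their total
weight is `O(1 / n)`. -/


open Filter

noncomputable section

/-- Length of the cycle of `σ` containing the point `x`. -/
def cycLen {n : ℕ} (σ : Equiv.Perm (Fin n)) (x : Fin n) : ℕ :=
  Function.minimalPeriod σ x

/-- `#_ℓ(σ)`: the number of cycles of length `ℓ` of `σ`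
(fixed points counting as cycles of length 1). -/
def cycCount {n : ℕ} (σ : Equiv.Perm (Fin n)) (ℓ : ℕ) : ℕ :=
  (Finset.univ.filter fun x => cycLen σ x = ℓ).card / ℓ

/-- Probability of a set under a discrete distribution. -/
def prob {α : Type*} [Fintype α] (p : α → ℝ) (S : Set α) : ℝ :=
  ∑ x, S.indicator p x

/-- `A^μ`: the set of permutations `σ` such that, for `1 ≤ i ≤ ℓ(μ)`, the point `i`
lies in a cycle of length `μ_i`, and the points `1,…,ℓ(μ)` lie in pairwise distinct
cycles of `σ`.  (For `n ≥ ℓ(μ)` all the guards `(i : ℕ) < n` are satisfied.) -/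
def Aset {n m : ℕ} (μ : Fin m → ℕ) : Set (Equiv.Perm (Fin n)) :=
  {σ | (∀ i : Fin m, ∀ hi : (i : ℕ) < n, cycLen σ ⟨i, hi⟩ = μ i) ∧
    ∀ i j : Fin m, i ≠ j → ∀ (hi : (i : ℕ) < n) (hj : (j : ℕ) < n),
      ¬ σ.SameCycle ⟨i, hi⟩ ⟨j, hj⟩}

/-! ### Prescribing values of a conjugation-invariant permutation -/

/-- The probability that a random permutation with distribution `p` maps `e.1` to `e.2` for
every pair `e` in `R`. -/
def extProb {n : ℕ} (p : Equiv.Perm (Fin n) → ℝ) (R : Finset (Fin n × Fin n)) : ℝ :=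
  ∑ σ : Equiv.Perm (Fin n), if ∀ e ∈ R, σ e.1 = e.2 then p σ else 0

/-- The points occurring in a finite set of pairs. -/
def verts {n : ℕ} (R : Finset (Fin n × Fin n)) : Finset (Fin n) :=
  R.image Prod.fst ∪ R.image Prod.snd

lemma fst_mem_verts {n : ℕ} {R : Finset (Fin n × Fin n)} {e : Fin n × Fin n} (he : e ∈ R) :
    e.1 ∈ verts R :=
  Finset.mem_union_left _ (Finset.mem_image_of_mem _ he)

lemma snd_mem_verts {n : ℕ} {R : Finset (Fin n × Fin n)} {e : Fin n × Fin n} (he : e ∈ R) :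
    e.2 ∈ verts R :=
  Finset.mem_union_right _ (Finset.mem_image_of_mem _ he)

lemma card_verts_le {n : ℕ} (R : Finset (Fin n × Fin n)) : (verts R).card ≤ 2 * R.card := by
  have h1 := Finset.card_union_le (R.image Prod.fst) (R.image Prod.snd)
  have h2 := Finset.card_image_le (s := R) (f := Prod.fst)
  have h3 := Finset.card_image_le (s := R) (f := Prod.snd)
  unfold verts
  omega

lemma extProb_nonneg {n : ℕ} {p : Equiv.Perm (Fin n) → ℝ} (hp : ∀ σ, 0 ≤ p σ)
    (R : Finset (Fin n × Fin n)) : 0 ≤ extProb p R :=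
  Finset.sum_nonneg fun σ _ => by split_ifs <;> simp [hp]

lemma exists_of_extProb_ne_zero {n : ℕ} {p : Equiv.Perm (Fin n) → ℝ}
    {R : Finset (Fin n × Fin n)} (h : extProb p R ≠ 0) :
    ∃ σ : Equiv.Perm (Fin n), ∀ e ∈ R, σ e.1 = e.2 := by
  by_contra! hc
  refine h (Finset.sum_eq_zero fun σ _ => if_neg fun h' => ?_)
  obtain ⟨e, he, hne⟩ := hc σ
  exact hne (h' e he)

/-- Conjugation invariance: relabelling the points of `R` does not change the probability. -/
lemma extProb_conj {n : ℕ} {p : Equiv.Perm (Fin n) → ℝ}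
    (hc : ∀ τ σ : Equiv.Perm (Fin n), p (τ⁻¹ * σ * τ) = p σ)
    (τ : Equiv.Perm (Fin n)) (R : Finset (Fin n × Fin n)) :
    extProb p (R.image (Prod.map τ τ)) = extProb p R := by
  unfold extProb
  refine Fintype.sum_equiv (MulAut.conj τ⁻¹).toEquiv _ _ fun σ => ?_
  have : (MulAut.conj τ⁻¹).toEquiv σ = τ⁻¹ * σ * τ := by simp
  rw [this, hc]
  refine if_congr ?_ rfl rfl
  simp only [Finset.forall_mem_image, Prod.map_fst, Prod.map_snd, Equiv.Perm.mul_apply]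
  refine forall₂_congr fun e _ => ?_
  rw [Equiv.Perm.inv_eq_iff_eq]

lemma extProb_insert_target_fresh {n : ℕ} {p : Equiv.Perm (Fin n) → ℝ}
    (hc : ∀ τ σ : Equiv.Perm (Fin n), p (τ⁻¹ * σ * τ) = p σ)
    {R : Finset (Fin n × Fin n)} {a b w : Fin n} (hab : b ∉ insert a (verts R))
    (hw : w ∉ insert a (verts R)) :
    extProb p (insert (a, w) R) = extProb p (insert (a, b) R) := by
  rw [← extProb_conj hc (Equiv.swap b w) (insert (a, b) R)]
  simp only [Finset.mem_insert, not_or] at hab hw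
  congr 1
  rw [Finset.image_insert]
  have h2 : Prod.map (Equiv.swap b w) (Equiv.swap b w) (a, b) = (a, w) := by
    simp [Equiv.swap_apply_of_ne_of_ne (Ne.symm hab.1) (Ne.symm hw.1)]
  rw [h2]
  congr 1
  have : Set.EqOn (Prod.map (Equiv.swap b w) (Equiv.swap b w)) id (R : Set (Fin n × Fin n)) := by
    intro e he
    have h1 := fst_mem_verts he
    have h2 := snd_mem_verts he
    ext1
    · exact Equiv.swap_apply_of_ne_of_ne (fun h => hab.2 (h ▸ h1)) (fun h => hw.2 (h ▸ h1))
    · exact Equiv.swap_apply_of_ne_of_ne (fun h => hab.2 (h ▸ h2)) (fun h => hw.2 (h ▸ h2))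
  rw [Finset.image_congr this, Finset.image_id]

/-- Conditioning on the image of `a`, all fresh images of `a` being equally likely. -/
lemma extProb_peel_target {n : ℕ} {p : Equiv.Perm (Fin n) → ℝ}
    (hc : ∀ τ σ : Equiv.Perm (Fin n), p (τ⁻¹ * σ * τ) = p σ)
    {R : Finset (Fin n × Fin n)} {a b : Fin n} (hab : b ∉ insert a (verts R)) :
    extProb p R = ((n : ℝ) - (insert a (verts R)).card) * extProb p (insert (a, b) R)
      + ∑ y ∈ insert a (verts R), extProb p (insert (a, y) R) := by
  have h1 : extProb p R = ∑ y, extProb p (insert (a, y) R) := by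
    unfold extProb
    rw [Finset.sum_comm]
    refine Finset.sum_congr rfl fun σ _ => ?_
    simp only [Finset.forall_mem_insert]
    rw [Finset.sum_eq_single (σ a)]
    · simp
    · intro y _ hy
      exact if_neg fun h => hy h.1.symm
    · simp
  rw [h1, ← Finset.sum_compl_add_sum (insert a (verts R))]
  congr 1
  rw [Finset.sum_congr rfl fun w hw => extProb_insert_target_fresh hc hab
    (Finset.mem_compl.1 hw), Finset.sum_const, Finset.card_compl, nsmul_eq_mul,
    Nat.cast_sub (Finset.card_le_univ _), Fintype.card_fin]

/-- Passing to the inverse permutation exchanges sources and targets. -/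
lemma extProb_swap {n : ℕ} (p : Equiv.Perm (Fin n) → ℝ) (R : Finset (Fin n × Fin n)) :
    extProb (fun σ => p σ⁻¹) (R.image Prod.swap) = extProb p R := by
  unfold extProb
  refine Fintype.sum_equiv (Equiv.inv _) _ _ fun σ => ?_
  simp only [Equiv.inv_apply, Finset.forall_mem_image, Prod.fst_swap, Prod.snd_swap]
  refine if_congr ?_ rfl rfl
  refine forall₂_congr fun e _ => ?_
  rw [Equiv.Perm.inv_eq_iff_eq]
  exact eq_comm

lemma verts_swap {n : ℕ} (R : Finset (Fin n × Fin n)) : verts (R.image Prod.swap) = verts R := by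
  unfold verts
  rw [Finset.image_image, Finset.image_image, Finset.union_comm]
  rfl

/-- Conditioning on the preimage of `b`, all fresh preimages of `b` being equally likely. -/
lemma extProb_peel_source {n : ℕ} {p : Equiv.Perm (Fin n) → ℝ}
    (hc : ∀ τ σ : Equiv.Perm (Fin n), p (τ⁻¹ * σ * τ) = p σ)
    {R : Finset (Fin n × Fin n)} {a b : Fin n} (hab : a ∉ insert b (verts R)) :
    extProb p R = ((n : ℝ) - (insert b (verts R)).card) * extProb p (insert (a, b) R)
      + ∑ y ∈ insert b (verts R), extProb p (insert (y, b) R) := by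
  have key := extProb_peel_target (p := fun σ => p σ⁻¹) (R := R.image Prod.swap) (a := b) (b := a)
    (fun τ σ => by rw [← hc τ σ⁻¹]; simp [mul_assoc]) (by rwa [verts_swap])
  have hi : ∀ y, insert (b, y) (R.image Prod.swap) = (insert (y, b) R).image Prod.swap := fun y => by
    rw [Finset.image_insert]; rfl
  simp only [hi, extProb_swap, verts_swap] at key
  exact key

lemma exists_perm_of_embeddings {n m : ℕ} (g g' : Fin m ↪ Fin n) :
    ∃ τ : Equiv.Perm (Fin n), ∀ i, τ (g i) = g' i := by
  have := (Equiv.Perm.isMultiplyPretransitive (Fin n) m).exists_smul_eq g g'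
  obtain ⟨τ, hτ⟩ := this
  exact ⟨τ, fun i => by rw [← hτ]; rfl⟩

lemma cycLen_conj {n : ℕ} (τ σ : Equiv.Perm (Fin n)) (x : Fin n) :
    cycLen (τ⁻¹ * σ * τ) x = cycLen σ (τ x) := by
  unfold cycLen
  refine Function.minimalPeriod_eq_minimalPeriod_iff.2 fun i => ?_
  unfold Function.IsPeriodicPt Function.IsFixedPt
  rw [← Equiv.Perm.coe_pow, ← Equiv.Perm.coe_pow]
  have : (τ⁻¹ * σ * τ) ^ i = τ⁻¹ * σ ^ i * τ := by
    have := conj_pow (a := τ⁻¹) (b := σ) (i := i)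
    simpa using this
  rw [this]
  simp only [Equiv.Perm.mul_apply]
  rw [Equiv.Perm.inv_eq_iff_eq]

lemma cycLen_pos {n : ℕ} (σ : Equiv.Perm (Fin n)) (x : Fin n) : 0 < cycLen σ x :=
  Function.minimalPeriod_pos_of_mem_periodicPts
    (Function.Injective.mem_periodicPts σ.injective x)

/-- A point of a finite set stable under `σ` lies in a cycle no longer than that set. -/
lemma cycLen_le_card {n : ℕ} (σ : Equiv.Perm (Fin n)) (S : Finset (Fin n))
    (hS : ∀ x ∈ S, σ x ∈ S) {x : Fin n} (hx : x ∈ S) : cycLen σ x ≤ S.card := by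
  have hmem : ∀ i : ℕ, σ^[i] x ∈ S := by
    intro i
    induction i with
    | zero => simpa
    | succ i ih => rw [Function.iterate_succ_apply']; exact hS _ ih
  have := Finset.card_le_card_of_injOn (s := Finset.range (cycLen σ x)) (t := S)
    (fun i => σ^[i] x) (fun i _ => hmem i) (by
      intro i hi j hj h
      simp only [Finset.coe_range, Set.mem_Iio] at hi hj
      exact (Function.iterate_eq_iterate_iff_of_lt_minimalPeriod hi hj).1 h)
  simpa using this

/-- The points in cycles of length `c` number at most `2c` times the number of such cycles. -/
lemma card_cycLen_eq_le {n : ℕ} (σ : Equiv.Perm (Fin n)) {c : ℕ} (hc : 1 ≤ c) :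
    (Finset.univ.filter fun x => cycLen σ x = c).card ≤ 2 * c * cycCount σ c := by
  unfold cycCount
  set A := Finset.univ.filter fun x => cycLen σ x = c with hA
  rcases A.eq_empty_or_nonempty with h | ⟨x, hx⟩
  · simp [h]
  have hcA : c ≤ A.card := by
    have hx' : cycLen σ x = c := by simpa [hA] using hx
    rw [← hx']
    refine cycLen_le_card σ A (fun y hy => ?_) hx
    have hy' : cycLen σ y = c := by simpa [hA] using hy
    have : cycLen σ (σ y) = c := by
      rw [← hy']
      exact Function.minimalPeriod_apply (Function.Injective.mem_periodicPts σ.injective y)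
    simpa [hA] using this
  have h1 : 1 ≤ A.card / c := (Nat.one_le_div_iff (by omega)).2 hcA
  have h2 := Nat.div_add_mod A.card c
  have h3 := Nat.mod_lt A.card (show 0 < c by omega)
  nlinarith

/-! ### Estimates from the moments of short cycles -/

/-- The points of `σ` lying in cycles of length at most `e`. -/
def shortPts {n : ℕ} (σ : Equiv.Perm (Fin n)) (e : ℕ) : Finset (Fin n) :=
  Finset.univ.filter fun x => cycLen σ x ≤ e

lemma card_shortPts_le {n : ℕ} (σ : Equiv.Perm (Fin n)) (e : ℕ) :
    (shortPts σ e).card ≤ 2 * e * ∑ c : Fin e, cycCount σ (c + 1) := by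
  have hsub : shortPts σ e ⊆ Finset.univ.biUnion fun c : Fin e =>
      Finset.univ.filter fun x => cycLen σ x = c + 1 := by
    intro x hx
    have hx' : cycLen σ x ≤ e := by simpa [shortPts] using hx
    have := cycLen_pos σ x
    simp only [Finset.mem_biUnion, Finset.mem_univ, true_and, Finset.mem_filter]
    exact ⟨⟨cycLen σ x - 1, by omega⟩, by simp; omega⟩
  refine (Finset.card_le_card hsub).trans (Finset.card_biUnion_le.trans ?_)
  rw [Finset.mul_sum]
  refine Finset.sum_le_sum fun c _ => ?_
  refine (card_cycLen_eq_le σ (Nat.le_add_left 1 c)).trans ?_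
  have := c.2
  gcongr
  omega

lemma exists_moment_shortPts_le {p : (n : ℕ) → Equiv.Perm (Fin n) → ℝ}
    (hpos : ∀ n σ, 0 ≤ p n σ)
    (hmom : ∀ (m : ℕ) (c : Fin m → ℕ), (∀ i, 1 ≤ c i) →
      ∃ C : ℝ, ∀ᶠ n in atTop,
        (∑ σ : Equiv.Perm (Fin n), p n σ * ∏ i, (cycCount σ (c i) : ℝ)) ≤ C) (e : ℕ) :
    ∃ C : ℝ, 0 ≤ C ∧ ∀ᶠ n in atTop,
      (∑ σ : Equiv.Perm (Fin n), p n σ * ((shortPts σ e).card : ℝ) ^ e) ≤ C := by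
  choose C hC using fun h : Fin e → Fin e =>
    hmom e (fun i => (h i : ℕ) + 1) (fun i => Nat.le_add_left 1 _)
  refine ⟨(2 * e) ^ e * ∑ h, |C h|, by positivity, ?_⟩
  filter_upwards [eventually_all.2 hC] with n hn
  have h1 : ∀ σ : Equiv.Perm (Fin n), p n σ * ((shortPts σ e).card : ℝ) ^ e ≤
      (2 * e) ^ e * ∑ h : Fin e → Fin e, p n σ * ∏ i, (cycCount σ (h i + 1) : ℝ) := by
    intro σ
    have h2 : ((shortPts σ e).card : ℝ) ≤ 2 * e * ∑ c : Fin e, (cycCount σ (c + 1) : ℝ) := by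
      exact_mod_cast card_shortPts_le σ e
    calc p n σ * ((shortPts σ e).card : ℝ) ^ e
        ≤ p n σ * (2 * e * ∑ c : Fin e, (cycCount σ (c + 1) : ℝ)) ^ e := by
          have := hpos n σ
          gcongr
      _ = _ := by
          rw [mul_pow, Fintype.sum_pow, ← Finset.mul_sum]
          ring
  refine (Finset.sum_le_sum fun σ _ => h1 σ).trans ?_
  rw [← Finset.mul_sum, Finset.sum_comm]
  gcongr with h
  exact (hn h).trans (le_abs_self _)

/-- A family of `e` points all lying in cycles of length at most `e` is as rare as `n ^ (-e)`:
by symmetry its probability is the average over all families, which is a moment of the number of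
points in short cycles. -/
lemma prob_shortPts_le {n : ℕ} {p : Equiv.Perm (Fin n) → ℝ} (hpos : ∀ σ, 0 ≤ p σ)
    (hc : ∀ τ σ : Equiv.Perm (Fin n), p (τ⁻¹ * σ * τ) = p σ) (e : ℕ) (g : Fin e ↪ Fin n) :
    (n.descFactorial e : ℝ) * (∑ σ : Equiv.Perm (Fin n),
      if ∀ i, g i ∈ shortPts σ e then p σ else 0) ≤
      ∑ σ : Equiv.Perm (Fin n), p σ * ((shortPts σ e).card : ℝ) ^ e := by
  classical
  have hsym : ∀ g' : Fin e ↪ Fin n, (∑ σ : Equiv.Perm (Fin n),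
      if ∀ i, g' i ∈ shortPts σ e then p σ else 0) = ∑ σ : Equiv.Perm (Fin n),
      if ∀ i, g i ∈ shortPts σ e then p σ else 0 := by
    intro g'
    obtain ⟨τ, hτ⟩ := exists_perm_of_embeddings g g'
    refine Fintype.sum_equiv (MulAut.conj τ⁻¹).toEquiv _ _ fun σ => ?_
    have : (MulAut.conj τ⁻¹).toEquiv σ = τ⁻¹ * σ * τ := by simp
    rw [this, hc]
    refine if_congr ?_ rfl rfl
    simp [shortPts, cycLen_conj, hτ]
  have hcard : (n.descFactorial e : ℝ) = ((Finset.univ : Finset (Fin e ↪ Fin n)).card : ℝ) := by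
    rw [Finset.card_univ, Fintype.card_embedding_eq]
    simp
  rw [hcard, ← nsmul_eq_mul, ← Finset.sum_const, ← Finset.sum_congr rfl fun g' _ => hsym g',
    Finset.sum_comm]
  refine Finset.sum_le_sum fun σ _ => ?_
  rw [← Finset.sum_filter, Finset.sum_const, nsmul_eq_mul, mul_comm]
  refine mul_le_mul_of_nonneg_left ?_ (hpos σ)
  have h2 : (Finset.univ.filter fun g' : Fin e ↪ Fin n => ∀ i, g' i ∈ shortPts σ e).card ≤
      (Fintype.piFinset fun _ : Fin e => shortPts σ e).card := by
    refine Finset.card_le_card_of_injOn (fun g' => (g' : Fin e → Fin n)) (fun g' hg' => ?_)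
      (fun a _ b _ h => DFunLike.coe_injective h)
    simp only [Finset.coe_filter, Finset.mem_univ, true_and, Set.mem_ofPred_eq] at hg'
    simpa using hg'
  rw [Fintype.card_piFinset_const] at h2
  exact_mod_cast h2

lemma pow_le_two_pow_mul_descFactorial {n e : ℕ} (h : 2 * e ≤ n) :
    (n : ℝ) ^ e ≤ 2 ^ e * (n.descFactorial e : ℝ) := by
  have h1 := Nat.pow_sub_le_descFactorial n e
  have h2 : (n : ℝ) ≤ 2 * ((n + 1 - e : ℕ) : ℝ) := by
    have : n ≤ 2 * (n + 1 - e) := by omega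
    exact_mod_cast this
  calc (n : ℝ) ^ e ≤ (2 * ((n + 1 - e : ℕ) : ℝ)) ^ e := by gcongr
    _ = 2 ^ e * ((n + 1 - e : ℕ) : ℝ) ^ e := mul_pow _ _ _
    _ ≤ _ := by gcongr; exact_mod_cast h1

/-- If no pair of `R` can be peeled off, every extension of `R` permutes the sources of `R`, which
therefore all lie in cycles of length at most `R.card`. -/
lemma extProb_le_of_no_leaf {n : ℕ} {p : Equiv.Perm (Fin n) → ℝ} (hpos : ∀ σ, 0 ≤ p σ)
    (hc : ∀ τ σ : Equiv.Perm (Fin n), p (τ⁻¹ * σ * τ) = p σ) (R : Finset (Fin n × Fin n))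
    (hR : ∀ e ∈ R, e.1 ≠ e.2 → e.2 ∈ verts (R.erase e)) :
    (n.descFactorial R.card : ℝ) * extProb p R ≤
      ∑ σ : Equiv.Perm (Fin n), p σ * ((shortPts σ R.card).card : ℝ) ^ R.card := by
  have hrhs : 0 ≤ ∑ σ : Equiv.Perm (Fin n), p σ * ((shortPts σ R.card).card : ℝ) ^ R.card :=
    Finset.sum_nonneg fun σ _ => mul_nonneg (hpos σ) (by positivity)
  by_cases h0 : extProb p R = 0
  · simpa [h0] using hrhs
  obtain ⟨σ₀, hσ₀⟩ := exists_of_extProb_ne_zero h0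
  set S := R.image Prod.fst with hS
  have hinj : Set.InjOn Prod.fst (R : Set (Fin n × Fin n)) := by
    intro e he e' he' h
    refine Prod.ext h ?_
    rw [← hσ₀ e he, ← hσ₀ e' he', h]
  have hcard : S.card = R.card := Finset.card_image_of_injOn hinj
  have hsnd : ∀ e ∈ R, e.2 ∈ S := by
    intro e he
    by_cases hl : e.1 = e.2
    · rw [← hl]; exact Finset.mem_image_of_mem _ he
    have := hR e he hl
    rcases Finset.mem_union.1 this with h | h
    · exact Finset.image_subset_image (Finset.erase_subset _ _) h
    · obtain ⟨e', he', h'⟩ := Finset.mem_image.1 h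
      obtain ⟨hne, he'⟩ := Finset.mem_erase.1 he'
      refine absurd (hinj he' he (σ₀.injective ?_)) hne
      rw [hσ₀ e he, hσ₀ e' he', h']
  let g : Fin R.card ↪ Fin n :=
    ((finCongr hcard.symm).trans S.equivFin.symm).toEmbedding.trans (Function.Embedding.subtype _)
  have hg : ∀ i, g i ∈ S := fun i => (S.equivFin.symm (finCongr hcard.symm i)).2
  refine le_trans ?_ (prob_shortPts_le hpos hc R.card g)
  refine mul_le_mul_of_nonneg_left (Finset.sum_le_sum fun σ _ => ?_) (Nat.cast_nonneg _)
  by_cases hσ : ∀ e ∈ R, σ e.1 = e.2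
  · rw [if_pos hσ, if_pos]
    intro i
    have := cycLen_le_card σ S (fun x hx => by
      obtain ⟨e, he, rfl⟩ := Finset.mem_image.1 hx
      rw [hσ e he]
      exact hsnd e he) (hg i)
    simpa [shortPts, hcard] using this
  · rw [if_neg hσ]
    split_ifs
    · exact hpos σ
    · exact le_rfl

lemma card_insert_verts_le {n : ℕ} (R : Finset (Fin n × Fin n)) (a : Fin n) :
    (insert a (verts R)).card ≤ 2 * R.card + 1 :=
  (Finset.card_insert_le _ _).trans (by have := card_verts_le R; omega)

/-- Prescribing `e` values costs at least a factor of order `n ^ (-e)`: pairs with a new end are peeled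
off, and what remains forces short cycles, which the moment hypothesis makes rare. -/
lemma exists_extProb_le {p : (n : ℕ) → Equiv.Perm (Fin n) → ℝ}
    (hpos : ∀ n σ, 0 ≤ p n σ) (hsum : ∀ n, ∑ σ, p n σ = 1)
    (hconj : ∀ n (τ σ : Equiv.Perm (Fin n)), p n (τ⁻¹ * σ * τ) = p n σ)
    (hmom : ∀ (m : ℕ) (c : Fin m → ℕ), (∀ i, 1 ≤ c i) →
      ∃ C : ℝ, ∀ᶠ n in atTop,
        (∑ σ : Equiv.Perm (Fin n), p n σ * ∏ i, (cycCount σ (c i) : ℝ)) ≤ C) (e : ℕ) :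
    ∃ C : ℝ, 0 ≤ C ∧ ∀ᶠ n in atTop, ∀ R : Finset (Fin n × Fin n), R.card = e →
      (n : ℝ) ^ e * extProb (p n) R ≤ C := by
  induction e with
  | zero =>
    refine ⟨1, zero_le_one, Eventually.of_forall fun n R hR => ?_⟩
    rw [Finset.card_eq_zero.1 hR]
    simp [extProb, hsum]
  | succ e ih =>
    obtain ⟨C, hC0, hC⟩ := ih
    obtain ⟨D, hD0, hD⟩ := exists_moment_shortPts_le hpos hmom (e + 1)
    refine ⟨max (2 * C) (2 ^ (e + 1) * D), le_max_of_le_left (by positivity), ?_⟩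
    filter_upwards [hC, hD, eventually_ge_atTop (2 * (2 * e + 1))] with n hCn hDn hn R hR
    have hnn : ∀ R', 0 ≤ extProb (p n) R' := extProb_nonneg (hpos n)
    by_cases hleaf : ∃ d ∈ R, d.1 ≠ d.2 ∧ d.2 ∉ verts (R.erase d)
    · obtain ⟨⟨a, b⟩, hd, hne, hb⟩ := hleaf
      refine le_max_of_le_left ?_
      have hcard : (R.erase (a, b)).card = e := by rw [Finset.card_erase_of_mem hd, hR]; rfl
      have hpeel := extProb_peel_target (hconj n) (R := R.erase (a, b)) (a := a) (b := b)
        (by simp only [Finset.mem_insert, not_or]; exact ⟨Ne.symm hne, hb⟩)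
      rw [Finset.insert_erase hd] at hpeel
      have hK : ((insert a (verts (R.erase (a, b)))).card : ℝ) ≤ n / 2 := by
        have h1 := card_insert_verts_le (R.erase (a, b)) a
        rw [hcard] at h1
        rw [le_div_iff₀ two_pos]
        have : (insert a (verts (R.erase (a, b)))).card * 2 ≤ n := by omega
        exact_mod_cast this
      have hrest : 0 ≤ ∑ y ∈ insert a (verts (R.erase (a, b))),
          extProb (p n) (insert (a, y) (R.erase (a, b))) := Finset.sum_nonneg fun y _ => hnn _
      have h2 : (n : ℝ) / 2 * extProb (p n) R ≤ extProb (p n) (R.erase (a, b)) := by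
        have := mul_le_mul_of_nonneg_right
          (show (n : ℝ) / 2 ≤ n - (insert a (verts (R.erase (a, b)))).card by linarith) (hnn R)
        linarith
      have h3 := hCn _ hcard
      have h4 := mul_le_mul_of_nonneg_left h2 (show (0 : ℝ) ≤ (n : ℝ) ^ e by positivity)
      rw [pow_succ]
      nlinarith
    · push Not at hleaf
      refine le_max_of_le_right ?_
      have h1 := extProb_le_of_no_leaf (hpos n) (hconj n) R hleaf
      rw [hR] at h1
      have h2 := pow_le_two_pow_mul_descFactorial (n := n) (e := e + 1) (by omega)
      calc (n : ℝ) ^ (e + 1) * extProb (p n) R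
          ≤ 2 ^ (e + 1) * (n.descFactorial (e + 1) : ℝ) * extProb (p n) R := by
            gcongr; exact hnn R
        _ = 2 ^ (e + 1) * ((n.descFactorial (e + 1) : ℝ) * extProb (p n) R) := by ring
        _ ≤ 2 ^ (e + 1) * D := by gcongr; exact h1.trans hDn

/-- Sets of pairs built by adding one pair at a time, one of whose two distinct ends is new while
the other is not yet used on the same side. The associated graph is a disjoint union of paths. -/
inductive Peelable {n : ℕ} : Finset (Fin n × Fin n) → Prop
  | empty : Peelable ∅
  | target {R : Finset (Fin n × Fin n)} {a b : Fin n} (h : Peelable R)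
      (hb : b ∉ insert a (verts R)) (ha : a ∉ R.image Prod.fst) : Peelable (insert (a, b) R)
  | source {R : Finset (Fin n × Fin n)} {a b : Fin n} (h : Peelable R)
      (ha : a ∉ insert b (verts R)) (hb : b ∉ R.image Prod.snd) : Peelable (insert (a, b) R)

/-- The inductive step for the asymptotics of `extProb` on peelable sets: `P'` and `P` are the
probabilities before and after adding a pair, and `s` is the contribution of the `K` excluded
positions. -/
lemma peel_estimate {e n : ℕ} {K P P' s A B M : ℝ} (hn : 0 < (n : ℝ)) (hP0 : 0 ≤ P)
    (hK0 : 0 ≤ K) (hK : K ≤ M) (hs0 : 0 ≤ s)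
    (hpeel : P' = (n - K) * P + s) (hP' : |(n : ℝ) ^ e * P' - 1| ≤ A / n)
    (hP : (n : ℝ) ^ (e + 1) * P ≤ B) (hs : (n : ℝ) ^ (e + 1) * s ≤ K * B) :
    |(n : ℝ) ^ (e + 1) * P - 1| ≤ (A + M * B) / n := by
  have hB : 0 ≤ B := le_trans (by positivity) hP
  have h1 : (n : ℝ) ^ (e + 1) * P - 1 =
      ((n : ℝ) ^ e * P' - 1) + (K * ((n : ℝ) ^ (e + 1) * P) - (n : ℝ) ^ (e + 1) * s) / n := by
    rw [hpeel]
    field_simp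
    ring
  have h2 : |(K * ((n : ℝ) ^ (e + 1) * P) - (n : ℝ) ^ (e + 1) * s) / n| ≤ M * B / n := by
    rw [abs_div, abs_of_pos hn]
    gcongr
    have h3 : K * ((n : ℝ) ^ (e + 1) * P) ≤ K * B := by gcongr
    have h4 : K * B ≤ M * B := by gcongr
    have h5 : 0 ≤ K * ((n : ℝ) ^ (e + 1) * P) := by positivity
    have h6 : 0 ≤ (n : ℝ) ^ (e + 1) * s := by positivity
    rw [abs_le]
    constructor <;> linarith
  rw [h1, add_div]
  exact (abs_add_le _ _).trans (add_le_add hP' h2)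

/-- On peelable sets of `e` pairs `extProb` is asymptotic to `n ^ (-e)`: conditionally on the other
pairs, the new end of the added pair is nearly uniform. -/
lemma exists_extProb_peelable {p : (n : ℕ) → Equiv.Perm (Fin n) → ℝ}
    (hpos : ∀ n σ, 0 ≤ p n σ) (hsum : ∀ n, ∑ σ, p n σ = 1)
    (hconj : ∀ n (τ σ : Equiv.Perm (Fin n)), p n (τ⁻¹ * σ * τ) = p n σ)
    (hmom : ∀ (m : ℕ) (c : Fin m → ℕ), (∀ i, 1 ≤ c i) →
      ∃ C : ℝ, ∀ᶠ n in atTop,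
        (∑ σ : Equiv.Perm (Fin n), p n σ * ∏ i, (cycCount σ (c i) : ℝ)) ≤ C) (e : ℕ) :
    ∃ C : ℝ, 0 ≤ C ∧ ∀ᶠ n : ℕ in atTop, ∀ R : Finset (Fin n × Fin n), Peelable R → R.card = e →
      |(n : ℝ) ^ e * extProb (p n) R - 1| ≤ C / n := by
  induction e with
  | zero =>
    refine ⟨0, le_rfl, Eventually.of_forall fun n R _ hR => ?_⟩
    rw [Finset.card_eq_zero.1 hR]
    simp [extProb, hsum]
  | succ e ih =>
    obtain ⟨A, hA0, hA⟩ := ih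
    obtain ⟨B, hB0, hB⟩ := exists_extProb_le hpos hsum hconj hmom (e + 1)
    refine ⟨A + (2 * e + 1) * B, by positivity, ?_⟩
    filter_upwards [hA, hB, eventually_gt_atTop 0] with n hAn hBn hn R hR hcard
    have hnn : ∀ R', 0 ≤ extProb (p n) R' := extProb_nonneg (hpos n)
    have hn' : 0 < (n : ℝ) := by exact_mod_cast hn
    cases hR with
    | empty => simp at hcard
    | @target R a b h hb ha =>
      have hy : ∀ y, (a, y) ∉ R := fun y hy => ha (Finset.mem_image_of_mem _ hy)
      have hc : R.card = e := by
        rw [Finset.card_insert_of_notMem (hy b)] at hcard; omega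
      have hK : ((insert a (verts R)).card : ℝ) ≤ 2 * e + 1 := by
        have := card_insert_verts_le R a
        rw [hc] at this
        exact_mod_cast this
      refine peel_estimate hn' (hnn _) (Nat.cast_nonneg _) hK
        (Finset.sum_nonneg fun y _ => hnn _) (extProb_peel_target (hconj n) hb)
        (hAn R h hc) (hBn _ hcard) ?_
      rw [Finset.mul_sum, ← nsmul_eq_mul]
      refine Finset.sum_le_card_nsmul _ _ _ fun y _ => hBn _ ?_
      rw [Finset.card_insert_of_notMem (hy y), hc]
    | @source R a b h ha hb =>
      have hy : ∀ y, (y, b) ∉ R := fun y hy => hb (Finset.mem_image_of_mem _ hy)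
      have hc : R.card = e := by
        rw [Finset.card_insert_of_notMem (hy a)] at hcard; omega
      have hK : ((insert b (verts R)).card : ℝ) ≤ 2 * e + 1 := by
        have := card_insert_verts_le R b
        rw [hc] at this
        exact_mod_cast this
      refine peel_estimate hn' (hnn _) (Nat.cast_nonneg _) hK
        (Finset.sum_nonneg fun y _ => hnn _) (extProb_peel_source (hconj n) ha)
        (hAn R h hc) (hBn _ hcard) ?_
      rw [Finset.mul_sum, ← nsmul_eq_mul]
      refine Finset.sum_le_card_nsmul _ _ _ fun y _ => hBn _ ?_
      rw [Finset.card_insert_of_notMem (hy y), hc]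

/-! ### The labelled graph drawn by a trajectory -/

/-- The inverse letter. -/
def invLetter {k : ℕ} (l : Fin k × Bool) : Fin k × Bool := (l.1, !l.2)

lemma invLetter_invLetter {k : ℕ} (l : Fin k × Bool) : invLetter (invLetter l) = l := by
  simp [invLetter]

lemma invLetter_ne {k : ℕ} (l : Fin k × Bool) : invLetter l ≠ l := by
  rcases l with ⟨j, _ | _⟩ <;> simp [invLetter]

/-- The permutation by which a letter acts. -/
def act {k n : ℕ} (σ : Fin k → Equiv.Perm (Fin n)) (l : Fin k × Bool) : Equiv.Perm (Fin n) :=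
  cond l.2 (σ l.1) (σ l.1)⁻¹

section Trajectory

variable {k n : ℕ} {P : Type*}

lemma perm_apply_inv (S : Equiv.Perm P) (p : P) : S (S⁻¹ p) = p := by simp

lemma perm_inv_apply (S : Equiv.Perm P) (p : P) : S⁻¹ (S p) = p := by simp

/-- The pair (source, target) that a trajectory `f` with `f p = ℓ p • f (S p)` imposes at position
`p` on the permutation whose letter is `ℓ p`. -/
def edge (ℓ : P → Fin k × Bool) (S : Equiv.Perm P) (f : P → Fin n) (p : P) : Fin n × Fin n :=
  cond (ℓ p).2 (f (S p), f p) (f p, f (S p))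

/-- An injective trajectory draws paths for the letters along which a height increases: the edge of
greatest height ends at a leaf. -/
lemma peelable_of_height_lt {ℓ : P → Fin k × Bool} {S : Equiv.Perm P} {f : P → Fin n}
    (hf : Function.Injective f) (hred : ∀ p, ℓ (S p) ≠ invLetter (ℓ p)) (j : Fin k) (h : P → ℕ)
    (hh : ∀ p, (ℓ p).1 = j → h p < h (S p)) (U : Finset P) (hU : ∀ p ∈ U, (ℓ p).1 = j) :
    Peelable (U.image (edge ℓ S f)) ∧ (U.image (edge ℓ S f)).card = U.card := by
  classical
  induction U using Finset.induction_on_max_value h with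
  | empty => exact ⟨.empty, rfl⟩
  | insert p U hp hmax ih =>
    obtain ⟨ih1, ih2⟩ := ih fun q hq => hU q (Finset.mem_insert_of_mem hq)
    have hpj : (ℓ p).1 = j := hU p (Finset.mem_insert_self _ _)
    have hlt := hh p hpj
    have hne : ∀ q ∈ U, q ≠ p := fun q hq h => hp (h ▸ hq)
    have hneS : ∀ q ∈ U, q ≠ S p := fun q hq h => by have := hmax q hq; rw [h] at this; omega
    have hfresh : f (S p) ∉ insert (f p) (verts (U.image (edge ℓ S f))) := by
      simp only [Finset.mem_insert, not_or]
      refine ⟨fun h => by rw [hf h] at hlt; omega, fun hv => ?_⟩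
      simp only [verts, Finset.mem_union, Finset.mem_image, exists_exists_and_eq_and] at hv
      rcases hv with ⟨q, hq, h⟩ | ⟨q, hq, h⟩ <;>
      · unfold edge at h
        rcases hb' : (ℓ q).2 with _ | _ <;> rw [hb'] at h <;>
        first
        | exact hneS q hq (hf h)
        | exact hne q hq (S.injective (hf h))
    have hopp : ∀ q ∈ U, (ℓ q).2 ≠ (ℓ p).2 → S q ≠ p := by
      intro q hq hb h
      refine hred q (Prod.ext ?_ ?_)
      · rw [h, hpj]; exact (hU q (Finset.mem_insert_of_mem hq)).symm
      · rw [h]; simp only [invLetter]; revert hb; cases (ℓ q).2 <;> cases (ℓ p).2 <;> simp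
    rw [Finset.image_insert, Finset.card_insert_of_notMem hp, ← ih2]
    rcases hb : (ℓ p).2 with _ | _
    · have he : edge ℓ S f p = (f p, f (S p)) := by simp [edge, hb]
      have hs : f p ∉ (U.image (edge ℓ S f)).image Prod.fst := by
        simp only [Finset.mem_image, exists_exists_and_eq_and, not_exists, not_and]
        intro q hq h
        unfold edge at h
        rcases hb' : (ℓ q).2 with _ | _ <;> rw [hb'] at h
        · exact hne q hq (hf h)
        · exact hopp q hq (by simp [hb, hb']) (hf h)
      rw [he]
      exact ⟨.target ih1 hfresh hs, Finset.card_insert_of_notMem fun hm =>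
        hs (Finset.mem_image_of_mem _ hm)⟩
    · have he : edge ℓ S f p = (f (S p), f p) := by simp [edge, hb]
      have hs : f p ∉ (U.image (edge ℓ S f)).image Prod.snd := by
        simp only [Finset.mem_image, exists_exists_and_eq_and, not_exists, not_and]
        intro q hq h
        unfold edge at h
        rcases hb' : (ℓ q).2 with _ | _ <;> rw [hb'] at h
        · exact hopp q hq (by simp [hb, hb']) (hf h)
        · exact hne q hq (hf h)
      rw [he]
      exact ⟨.source ih1 hfresh hs, Finset.card_insert_of_notMem fun hm =>
        hs (Finset.mem_image_of_mem _ hm)⟩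

/-- The same for letters before which the height increases: the edge of least height starts at a
leaf. -/
lemma peelable_of_height_inv_lt {ℓ : P → Fin k × Bool} {S : Equiv.Perm P} {f : P → Fin n}
    (hf : Function.Injective f) (hred : ∀ p, ℓ (S p) ≠ invLetter (ℓ p)) (j : Fin k) (h : P → ℕ)
    (hh : ∀ p, (ℓ p).1 = j → h (S⁻¹ p) < h p) (U : Finset P) (hU : ∀ p ∈ U, (ℓ p).1 = j) :
    Peelable (U.image (edge ℓ S f)) ∧ (U.image (edge ℓ S f)).card = U.card := by
  classical
  induction U using Finset.induction_on_min_value h with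
  | empty => exact ⟨.empty, rfl⟩
  | insert p U hp hmin ih =>
    obtain ⟨ih1, ih2⟩ := ih fun q hq => hU q (Finset.mem_insert_of_mem hq)
    have hpj : (ℓ p).1 = j := hU p (Finset.mem_insert_self _ _)
    have hlt := hh p hpj
    have hne : ∀ q ∈ U, q ≠ p := fun q hq h => hp (h ▸ hq)
    have hneS : ∀ q ∈ U, S q ≠ p := fun q hq h => by
      have := hmin q hq
      rw [← h, perm_inv_apply, h] at hlt
      omega
    have hfresh : f p ∉ insert (f (S p)) (verts (U.image (edge ℓ S f))) := by
      simp only [Finset.mem_insert, not_or]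
      refine ⟨fun h => ?_, fun hv => ?_⟩
      · have h1 := hf h
        have h2 : S⁻¹ p = p := by rw [Equiv.Perm.inv_eq_iff_eq]; exact h1
        rw [h2] at hlt
        omega
      simp only [verts, Finset.mem_union, Finset.mem_image, exists_exists_and_eq_and] at hv
      rcases hv with ⟨q, hq, h⟩ | ⟨q, hq, h⟩ <;>
      · unfold edge at h
        rcases hb' : (ℓ q).2 with _ | _ <;> rw [hb'] at h <;>
        first
        | exact hneS q hq (hf h)
        | exact hne q hq (hf h)
    have hopp : ∀ q ∈ U, (ℓ q).2 ≠ (ℓ p).2 → q ≠ S p := by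
      intro q hq hb h
      refine hred p (Prod.ext ?_ ?_)
      · rw [← h]; exact (hU q (Finset.mem_insert_of_mem hq)).trans hpj.symm
      · rw [← h]; simp only [invLetter]; revert hb; cases (ℓ q).2 <;> cases (ℓ p).2 <;> simp
    rw [Finset.image_insert, Finset.card_insert_of_notMem hp, ← ih2]
    rcases hb : (ℓ p).2 with _ | _
    · have he : edge ℓ S f p = (f p, f (S p)) := by simp [edge, hb]
      have hs : f (S p) ∉ (U.image (edge ℓ S f)).image Prod.snd := by
        simp only [Finset.mem_image, exists_exists_and_eq_and, not_exists, not_and]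
        intro q hq h
        unfold edge at h
        rcases hb' : (ℓ q).2 with _ | _ <;> rw [hb'] at h
        · exact hne q hq (S.injective (hf h))
        · exact hopp q hq (by simp [hb, hb']) (hf h)
      rw [he]
      exact ⟨.source ih1 hfresh hs, Finset.card_insert_of_notMem fun hm =>
        hs (Finset.mem_image_of_mem _ hm)⟩
    · have he : edge ℓ S f p = (f (S p), f p) := by simp [edge, hb]
      have hs : f (S p) ∉ (U.image (edge ℓ S f)).image Prod.fst := by
        simp only [Finset.mem_image, exists_exists_and_eq_and, not_exists, not_and]
        intro q hq h
        unfold edge at h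
        rcases hb' : (ℓ q).2 with _ | _ <;> rw [hb'] at h
        · exact hopp q hq (by simp [hb, hb']) (hf h)
        · exact hne q hq (S.injective (hf h))
      rw [he]
      exact ⟨.target ih1 hfresh hs, Finset.card_insert_of_notMem fun hm =>
        hs (Finset.mem_image_of_mem _ hm)⟩

variable [Fintype P]

/-- All the pairs imposed on the `j`-th permutation by a trajectory `f`. -/
def edges (ℓ : P → Fin k × Bool) (S : Equiv.Perm P) (f : P → Fin n) (j : Fin k) :
    Finset (Fin n × Fin n) :=
  (Finset.univ.filter fun p => (ℓ p).1 = j).image (edge ℓ S f)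

/-- Following a trajectory letter by letter amounts to sending, for each letter, the source of every
pair to its target. -/
lemma compat_iff (σ : Fin k → Equiv.Perm (Fin n)) (ℓ : P → Fin k × Bool) (S : Equiv.Perm P)
    (f : P → Fin n) :
    (∀ p, act σ (ℓ p) (f (S p)) = f p) ↔ ∀ j, ∀ e ∈ edges ℓ S f j, σ j e.1 = e.2 := by
  simp only [edges, Finset.forall_mem_image, Finset.mem_filter, Finset.mem_univ, true_and]
  have h : ∀ p, act σ (ℓ p) (f (S p)) = f p ↔
      σ (ℓ p).1 (edge ℓ S f p).1 = (edge ℓ S f p).2 := by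
    intro p
    unfold act edge
    rcases hl : ℓ p with ⟨j, _ | _⟩
    · simp only [cond_false]
      rw [Equiv.Perm.inv_eq_iff_eq]
      exact eq_comm
    · simp
  constructor
  · rintro hc j p rfl
    exact (h p).1 (hc p)
  · intro hc p
    exact (h p).2 (hc _ rfl)

/-- The directed labelled half-edges of the graph drawn by a trajectory. -/
def darts (ℓ : P → Fin k × Bool) (S : Equiv.Perm P) (f : P → Fin n) :
    Finset (Fin n × (Fin k × Bool)) :=
  (Finset.univ.image fun p => (f p, ℓ p)) ∪ Finset.univ.image fun p => (f (S p), invLetter (ℓ p))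

lemma card_darts_le (ℓ : P → Fin k × Bool) (S : Equiv.Perm P) (f : P → Fin n) :
    (darts ℓ S f).card ≤ 2 * ∑ j, (edges ℓ S f j).card := by
  have hsub : darts ℓ S f ⊆ Finset.univ.biUnion fun j =>
      ((edges ℓ S f j).image fun e => (e.2, (j, true))) ∪
        (edges ℓ S f j).image fun e => (e.1, (j, false)) := by
    have he : ∀ p, edge ℓ S f p ∈ edges ℓ S f (ℓ p).1 := fun p =>
      Finset.mem_image_of_mem _ (by simp)
    intro d hd
    simp only [Finset.mem_biUnion, Finset.mem_univ, true_and, Finset.mem_union, Finset.mem_image]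
    rcases Finset.mem_union.1 hd with h | h
    · obtain ⟨p, -, rfl⟩ := Finset.mem_image.1 h
      refine ⟨(ℓ p).1, ?_⟩
      rcases hl : ℓ p with ⟨j, _ | _⟩
      · exact Or.inr ⟨_, by simpa [hl] using he p, by simp [edge, hl]⟩
      · exact Or.inl ⟨_, by simpa [hl] using he p, by simp [edge, hl]⟩
    · obtain ⟨p, -, rfl⟩ := Finset.mem_image.1 h
      refine ⟨(ℓ p).1, ?_⟩
      rcases hl : ℓ p with ⟨j, _ | _⟩
      · exact Or.inl ⟨_, by simpa [hl] using he p, by simp [edge, hl, invLetter]⟩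
      · exact Or.inr ⟨_, by simpa [hl] using he p, by simp [edge, hl, invLetter]⟩
  refine (Finset.card_le_card hsub).trans (Finset.card_biUnion_le.trans ?_)
  rw [Finset.mul_sum]
  refine Finset.sum_le_sum fun j _ => (Finset.card_union_le _ _).trans ?_
  rw [two_mul]
  exact add_le_add Finset.card_image_le Finset.card_image_le

/-- In the graph drawn by a reduced trajectory each vertex has degree at least two. If there are no
more edges than vertices, all degrees are two, so two visits of one vertex leave it either by the
same letter or in opposite directions. -/
lemma eq_or_eq_of_card_edges_le {ℓ : P → Fin k × Bool} {S : Equiv.Perm P} {f : P → Fin n}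
    (hred : ∀ p, ℓ (S p) ≠ invLetter (ℓ p))
    (hcard : ∑ j, (edges ℓ S f j).card ≤ (Finset.univ.image f).card) {p q : P} (hpq : f p = f q) :
    ℓ q = ℓ p ∨ ℓ q = invLetter (ℓ (S⁻¹ p)) := by
  set D := darts ℓ S f with hD
  have hout : ∀ p, (f p, ℓ p) ∈ D := fun p =>
    Finset.mem_union_left _ (Finset.mem_image_of_mem (fun p => (f p, ℓ p)) (Finset.mem_univ p))
  have hin : ∀ p, (f p, invLetter (ℓ (S⁻¹ p))) ∈ D := fun p =>
    Finset.mem_union_right _ (Finset.mem_image.2 ⟨S⁻¹ p, Finset.mem_univ _, by simp⟩)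
  have hmaps : ∀ d ∈ D, d.1 ∈ Finset.univ.image f := by
    intro d hd
    rcases Finset.mem_union.1 hd with h | h <;>
    · obtain ⟨p, -, rfl⟩ := Finset.mem_image.1 h
      exact Finset.mem_image_of_mem _ (Finset.mem_univ _)
  have hpair : ∀ p, ({(f p, ℓ p), (f p, invLetter (ℓ (S⁻¹ p)))} : Finset _) ⊆
      D.filter fun d => d.1 = f p := by
    intro p d hd
    simp only [Finset.mem_insert, Finset.mem_singleton] at hd
    rcases hd with rfl | rfl
    · simp [hout]
    · exact Finset.mem_filter.2 ⟨hin p, rfl⟩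
  have hpaircard : ∀ p, ({(f p, ℓ p), (f p, invLetter (ℓ (S⁻¹ p)))} :
      Finset (Fin n × (Fin k × Bool))).card = 2 := by
    intro p
    refine Finset.card_pair fun h => ?_
    have := hred (S⁻¹ p)
    rw [perm_apply_inv] at this
    exact this (Prod.ext_iff.1 h).2
  have htwo : ∀ v ∈ Finset.univ.image f, 2 ≤ (D.filter fun d => d.1 = v).card := by
    intro v hv
    obtain ⟨p, -, rfl⟩ := Finset.mem_image.1 hv
    exact (hpaircard p).symm.le.trans (Finset.card_le_card (hpair p))
  have hle : (D.filter fun d => d.1 = f p).card ≤ 2 := by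
    by_contra! hlt
    have h1 : ∑ _v ∈ Finset.univ.image f, 2 < ∑ v ∈ Finset.univ.image f,
        (D.filter fun d => d.1 = v).card :=
      Finset.sum_lt_sum htwo ⟨f p, Finset.mem_image_of_mem _ (Finset.mem_univ _), hlt⟩
    rw [← Finset.card_eq_sum_card_fiberwise hmaps, Finset.sum_const, smul_eq_mul] at h1
    have h2 := card_darts_le ℓ S f
    rw [← hD] at h2
    omega
  have heq := Finset.eq_of_subset_of_card_le (hpair p) (hle.trans (hpaircard p).symm.le)
  have hq : (f q, ℓ q) ∈ D.filter fun d => d.1 = f p := by simp [hout, hpq]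
  rw [← heq] at hq
  simpa [hpq] using hq

/-- If the graph drawn by a reduced trajectory has no more edges than vertices, then the
trajectory is injective: two visits of one vertex would make it read the same
letters forever after, or the inverse letters backwards. -/
lemma injective_of_card_edges_le {ℓ : P → Fin k × Bool} {S : Equiv.Perm P} {f : P → Fin n}
    (σ : Fin k → Equiv.Perm (Fin n)) (hσ : ∀ p, act σ (ℓ p) (f (S p)) = f p)
    (hred : ∀ p, ℓ (S p) ≠ invLetter (ℓ p))
    (hsame : ∀ p q, (∀ s : ℕ, ℓ ((S ^ s) p) = ℓ ((S ^ s) q)) →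
      (∀ s : ℕ, f ((S ^ s) p) = f ((S ^ s) q)) → p = q)
    (hopp : ∀ p q, ¬ ∀ s : ℕ, ℓ ((S ^ s) q) = invLetter (ℓ ((S⁻¹ ^ (s + 1)) p)))
    (hcard : ∑ j, (edges ℓ S f j).card ≤ (Finset.univ.image f).card) :
    Function.Injective f := by
  intro p q hpq
  rcases eq_or_eq_of_card_edges_le hred hcard hpq with hl | hl
  · have key : ∀ s : ℕ, f ((S ^ s) p) = f ((S ^ s) q) ∧ ℓ ((S ^ s) p) = ℓ ((S ^ s) q) := by
      intro s
      induction s with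
      | zero => exact ⟨hpq, hl.symm⟩
      | succ s ih =>
        simp only [pow_succ', Equiv.Perm.mul_apply]
        generalize (S ^ s) p = p' at ih
        generalize (S ^ s) q = q' at ih
        have hf : f (S p') = f (S q') := by
          apply (act σ (ℓ p')).injective
          rw [hσ p', ih.1, ih.2, hσ q']
        refine ⟨hf, ?_⟩
        rcases eq_or_eq_of_card_edges_le hred hcard hf with h | h
        · exact h.symm
        · rw [perm_inv_apply, ih.2] at h
          exact absurd h (hred q')
    exact hsame p q (fun s => (key s).2) (fun s => (key s).1)
  · exfalso
    have key : ∀ s : ℕ, f ((S⁻¹ ^ s) p) = f ((S ^ s) q) ∧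
        ℓ ((S ^ s) q) = invLetter (ℓ ((S⁻¹ ^ (s + 1)) p)) := by
      intro s
      induction s with
      | zero => exact ⟨hpq, by simpa using hl⟩
      | succ s ih =>
        simp only [pow_succ', Equiv.Perm.mul_apply] at ih ⊢
        generalize (S⁻¹ ^ s) p = p' at ih
        generalize (S ^ s) q = q' at ih
        have hf : f (S⁻¹ p') = f (S q') := by
          have h1 := hσ (S⁻¹ p')
          have h2 := hσ q'
          rw [perm_apply_inv, ih.1] at h1
          rw [ih.2] at h2
          rw [← h1, ← h2]
          unfold act invLetter
          rcases ℓ (S⁻¹ p') with ⟨j, _ | _⟩ <;> simp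
        refine ⟨hf, ?_⟩
        rcases eq_or_eq_of_card_edges_le hred hcard hf with h | h
        · refine absurd ?_ (hred q')
          rw [h, ih.2, invLetter_invLetter]
        · exact h
    exact hopp p q fun s => (key s).2

end Trajectory

/-! ### Closed trajectories of a word -/

section Word

variable {k : ℕ}

/-- A word that repeats the block `B` represents a power of `B`. -/
lemma mk_eq_pow_of_periodic (B : List (Fin k × Bool)) (e : ℕ) (L : List (Fin k × Bool))
    (hlen : L.length = e * B.length)
    (hL : ∀ i, i < L.length → L[i]? = B[i % B.length]?) :
    FreeGroup.mk L = FreeGroup.mk B ^ e := by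
  induction e generalizing L with
  | zero =>
    have : L = [] := List.eq_nil_of_length_eq_zero (by simpa using hlen)
    rw [this, pow_zero]
    rfl
  | succ e ih =>
    have hlen' : L.length = e * B.length + B.length := by rw [hlen]; ring
    have htake : L.take B.length = B := by
      refine List.ext_getElem? fun i => ?_
      by_cases hi : i < B.length
      · rw [List.getElem?_take_of_lt hi, hL i (by omega), Nat.mod_eq_of_lt hi]
      · rw [List.getElem?_eq_none (by simp; omega), List.getElem?_eq_none (by omega)]
    have hdrop := ih (L.drop B.length) (by simp; omega) (fun i hi => by
      rw [List.length_drop] at hi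
      rw [List.getElem?_drop, hL _ (by omega), Nat.add_mod_left])
    have happ := List.take_append_drop B.length L
    rw [htake] at happ
    rw [pow_succ', ← hdrop, FreeGroup.mul_mk, happ]

variable {t : ℕ}

/-- The successor of a position on the closed trajectories: the word is read letter by letter, and
after a complete reading the starting point changes by `ν`. -/
def stepPerm {Q : Type*} (ν : Equiv.Perm Q) : Equiv.Perm (Q × ZMod t) where
  toFun x := (if x.2 + 1 = 0 then ν x.1 else x.1, x.2 + 1)
  invFun x := (if x.2 = 0 then ν⁻¹ x.1 else x.1, x.2 - 1)
  left_inv x := by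
    by_cases h : x.2 + 1 = 0 <;> simp [h]
    exact Prod.ext rfl (by rw [← eq_neg_iff_add_eq_zero.2 h])
  right_inv x := by
    by_cases h : x.2 = 0 <;> simp [h]
    exact Prod.ext rfl h.symm

lemma stepPerm_pow_snd {Q : Type*} (ν : Equiv.Perm Q) (s : ℕ) (x : Q × ZMod t) :
    ((stepPerm ν ^ s) x).2 = x.2 + s := by
  induction s with
  | zero => simp
  | succ s ih =>
    rw [pow_succ', Equiv.Perm.mul_apply]
    change ((stepPerm ν ^ s) x).2 + 1 = _
    rw [ih]
    push_cast
    ring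

lemma stepPerm_inv_pow_snd {Q : Type*} (ν : Equiv.Perm Q) (s : ℕ) (x : Q × ZMod t) :
    (((stepPerm ν)⁻¹ ^ s) x).2 = x.2 - s := by
  induction s with
  | zero => simp
  | succ s ih =>
    rw [pow_succ', Equiv.Perm.mul_apply]
    change (((stepPerm ν)⁻¹ ^ s) x).2 - 1 = _
    rw [ih]
    push_cast
    ring

variable [NeZero t]

lemma zmod_val_add_one {x : ZMod t} (h : x.val + 1 < t) : (x + 1).val = x.val + 1 := by
  have : ((x.val + 1 : ℕ) : ZMod t) = x + 1 := by simp
  rw [← this, ZMod.val_natCast, Nat.mod_eq_of_lt h]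

lemma zmod_add_one_eq_zero {x : ZMod t} (h : x.val + 1 = t) : x + 1 = 0 := by
  have : ((x.val + 1 : ℕ) : ZMod t) = x + 1 := by simp
  rw [← this, h, ZMod.natCast_self]

/-- The letters of a word of length `t`, indexed cyclically. -/
def cycLetter (L : List (Fin k × Bool)) (h : L.length = t) (x : ZMod t) : Fin k × Bool :=
  L[x.val]'(h ▸ ZMod.val_lt x)

lemma cycLetter_natCast (L : List (Fin k × Bool)) (h : L.length = t) {i : ℕ} (hi : i < t) :
    L[i]? = some (cycLetter L h (i : ZMod t)) := by
  unfold cycLetter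
  simp only [ZMod.val_natCast, Nat.mod_eq_of_lt hi]
  exact List.getElem?_eq_getElem _

/-- A word which is not a proper power has no nontrivial cyclic period. -/
lemma cycLetter_primitive {Ω : FreeGroup (Fin k)}
    (hΩ : ¬ ∃ (Ω' : FreeGroup (Fin k)) (e : ℕ), 2 ≤ e ∧ Ω = Ω' ^ e)
    (h : Ω.toWord.length = t) (d : ZMod t)
    (hd : ∀ x, cycLetter Ω.toWord h (x + d) = cycLetter Ω.toWord h x) : d = 0 := by
  by_contra hd0
  set u := cycLetter Ω.toWord h with hu
  have ht : 0 < t := Nat.pos_of_ne_zero (NeZero.ne t)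
  set g := Nat.gcd d.val t with hg
  have hg0 : 0 < g := Nat.gcd_pos_of_pos_right _ ht
  have hgt : g ∣ t := Nat.gcd_dvd_right _ _
  have hglt : g < t := by
    have h1 : g ≤ d.val := Nat.le_of_dvd
      (Nat.pos_of_ne_zero fun h0 => hd0 ((ZMod.val_eq_zero d).1 h0)) (Nat.gcd_dvd_left _ _)
    exact h1.trans_lt (ZMod.val_lt d)
  have hmul : ∀ (c : ℕ) x, u (x + c * d) = u x := by
    intro c
    induction c with
    | zero => simp
    | succ c ih =>
      intro x
      have : x + ((c + 1 : ℕ) : ZMod t) * d = (x + c * d) + d := by push_cast; ring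
      rw [this, hd, ih]
  -- by Bézout the greatest common divisor of `d` and `t` is a multiple of `d` modulo `t`
  have hgd : ∃ c : ℕ, (g : ZMod t) = c * d := by
    have hb := congrArg (Int.cast : ℤ → ZMod t) (Nat.gcd_eq_gcd_ab d.val t)
    push_cast at hb
    rw [ZMod.natCast_self, zero_mul, add_zero, ZMod.natCast_zmod_val] at hb
    refine ⟨((Nat.gcdA d.val t : ℤ) : ZMod t).val, ?_⟩
    rw [ZMod.natCast_zmod_val, hg, hb, mul_comm]
  obtain ⟨c, hc⟩ := hgd
  have hper : ∀ (b : ℕ) x, u (x + b * g) = u x := by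
    intro b x
    rw [hc, ← mul_assoc, ← Nat.cast_mul]
    exact hmul _ _
  obtain ⟨e, he⟩ := hgt
  refine hΩ ⟨FreeGroup.mk (Ω.toWord.take g), e, ?_, ?_⟩
  · by_contra! hlt
    have : e = 0 ∨ e = 1 := by omega
    rcases this with rfl | rfl
    · omega
    · omega
  · have hB : (Ω.toWord.take g).length = g := by simp [h]; omega
    conv_lhs => rw [← FreeGroup.mk_toWord (x := Ω)]
    refine mk_eq_pow_of_periodic _ _ _ (by rw [hB, h, he, mul_comm]) fun i hi => ?_
    rw [h] at hi
    have hig : i % g < g := Nat.mod_lt _ hg0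
    rw [hB, List.getElem?_take_of_lt hig, cycLetter_natCast _ h hi,
      cycLetter_natCast _ h (hig.trans hglt)]
    congr 1
    have : ((i : ℕ) : ZMod t) = ((i % g : ℕ) : ZMod t) + ((i / g : ℕ) : ZMod t) * (g : ZMod t) := by
      conv_lhs => rw [← Nat.mod_add_div i g]
      push_cast
      ring
    rw [this]
    exact hper _ _

lemma cycLetter_ends_ne {Ω : FreeGroup (Fin k)}
    (hends : ∀ a b : Fin k × Bool, Ω.toWord.head? = some a →
      Ω.toWord.getLast? = some b → a.1 ≠ b.1) (h : Ω.toWord.length = t) {x : ZMod t}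
    (hx : x.val + 1 = t) : (cycLetter Ω.toWord h 0).1 ≠ (cycLetter Ω.toWord h x).1 := by
  refine hends _ _ ?_ ?_
  · have := cycLetter_natCast Ω.toWord h (Nat.pos_of_ne_zero (NeZero.ne t))
    rw [List.head?_eq_getElem?, this, Nat.cast_zero]
  · have := cycLetter_natCast Ω.toWord h (ZMod.val_lt x)
    rw [List.getLast?_eq_getElem?, h, show t - 1 = x.val by omega, this, ZMod.natCast_zmod_val]

/-- A reduced word with distinct extremal letters is cyclically reduced. -/
lemma cycLetter_reduced {Ω : FreeGroup (Fin k)}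
    (hends : ∀ a b : Fin k × Bool, Ω.toWord.head? = some a →
      Ω.toWord.getLast? = some b → a.1 ≠ b.1) (h : Ω.toWord.length = t) (x : ZMod t) :
    cycLetter Ω.toWord h (x + 1) ≠ invLetter (cycLetter Ω.toWord h x) := by
  have hx := ZMod.val_lt x
  rcases Nat.lt_or_ge (x.val + 1) t with h1 | h1
  · have hr : FreeGroup.IsReduced Ω.toWord := FreeGroup.isReduced_toWord
    have h2 := List.isChain_iff_getElem.1 hr x.val (by omega)
    intro heq
    have h3 : cycLetter Ω.toWord h (x + 1) = Ω.toWord[x.val + 1] := by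
      unfold cycLetter
      simp only [zmod_val_add_one h1]
    rw [h3] at heq
    have h4 := h2 (by rw [heq]; rfl)
    rw [heq] at h4
    revert h4
    simp [invLetter, cycLetter]
  · have h2 : x.val + 1 = t := by omega
    have h3 := cycLetter_ends_ne hends h h2
    rw [zmod_add_one_eq_zero h2]
    exact fun heq => h3 (by rw [heq]; rfl)

/-- No cyclically reduced word is a cyclic rotation of its inverse: the reflection relating the two
would fix a letter or exchange two neighbouring ones. -/
lemma not_forall_eq_invLetter {u : ZMod t → Fin k × Bool}
    (hred : ∀ x, u (x + 1) ≠ invLetter (u x)) (c : ZMod t) :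
    ¬ ∀ x, u x = invLetter (u (c - x)) := by
  intro h
  have hc : (c.val : ZMod t) = c := ZMod.natCast_zmod_val c
  obtain ⟨y, hy | hy⟩ := Nat.even_or_odd' c.val
  · have h1 := h (y : ZMod t)
    rw [← hc, hy, show (((2 * y : ℕ) : ZMod t) - y) = y by push_cast; ring] at h1
    exact invLetter_ne _ h1.symm
  · have h1 := h ((y : ZMod t) + 1)
    rw [← hc, hy, show (((2 * y + 1 : ℕ) : ZMod t) - (y + 1)) = y by push_cast; ring] at h1
    exact hred _ h1

/-- A non-injective closed trajectory, with distinct points at the beginnings of the word, draws a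
graph having more edges than vertices. -/
lemma card_image_lt_card_edges {n : ℕ} {Q : Type*} [Fintype Q] (ν : Equiv.Perm Q)
    {Ω : FreeGroup (Fin k)}
    (hΩ : ¬ ∃ (Ω' : FreeGroup (Fin k)) (e : ℕ), 2 ≤ e ∧ Ω = Ω' ^ e)
    (hends : ∀ a b : Fin k × Bool, Ω.toWord.head? = some a →
      Ω.toWord.getLast? = some b → a.1 ≠ b.1) (h : Ω.toWord.length = t)
    (f : Q × ZMod t → Fin n) (hf0 : Function.Injective fun q => f (q, 0))
    (hf : ¬ Function.Injective f) (σ : Fin k → Equiv.Perm (Fin n))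
    (hσ : ∀ p, act σ (cycLetter Ω.toWord h p.2) (f (stepPerm ν p)) = f p) :
    (Finset.univ.image f).card <
      ∑ j, (edges (fun p => cycLetter Ω.toWord h p.2) (stepPerm ν) f j).card := by
  by_contra! hcard
  have hred := cycLetter_reduced hends h
  refine hf (injective_of_card_edges_le σ hσ (fun p => hred p.2) ?_ ?_ hcard)
  · intro p q hl hv
    simp only [stepPerm_pow_snd] at hl
    have hpq : p.2 = q.2 := by
      rw [← sub_eq_zero]
      refine cycLetter_primitive hΩ h _ fun x => ?_
      have h1 := hl (x - q.2).val
      rw [ZMod.natCast_zmod_val] at h1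
      rw [show x + (p.2 - q.2) = p.2 + (x - q.2) by ring, h1]
      congr 1
      ring
    have h1 := hv (-p.2).val
    have hp0 : ((stepPerm ν ^ (-p.2).val) p).2 = 0 := by
      rw [stepPerm_pow_snd, ZMod.natCast_zmod_val]; ring
    have hq0 : ((stepPerm ν ^ (-p.2).val) q).2 = 0 := by
      rw [stepPerm_pow_snd, ZMod.natCast_zmod_val, hpq]; ring
    have h2 : ((stepPerm ν ^ (-p.2).val) p).1 = ((stepPerm ν ^ (-p.2).val) q).1 := by
      apply hf0
      change f (_, 0) = f (_, 0)
      conv_lhs => rw [← hp0]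
      conv_rhs => rw [← hq0]
      exact h1
    exact (stepPerm ν ^ (-p.2).val).injective (Prod.ext h2 (hp0.trans hq0.symm))
  · intro p q hl
    simp only [stepPerm_pow_snd, stepPerm_inv_pow_snd] at hl
    refine not_forall_eq_invLetter hred (p.2 + q.2 - 1) fun x => ?_
    have h1 := hl (x - q.2).val
    push_cast at h1
    rw [ZMod.natCast_zmod_val] at h1
    rw [show q.2 + (x - q.2) = x by ring] at h1
    rw [h1]
    congr 2
    ring

/-- An injective closed trajectory imposes on each permutation a union of paths: a cycle would read
a single letter, whereas the two extremal letters of the word differ. -/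
lemma peelable_edges {n : ℕ} {Q : Type*} [Fintype Q] (ν : Equiv.Perm Q)
    {Ω : FreeGroup (Fin k)}
    (hends : ∀ a b : Fin k × Bool, Ω.toWord.head? = some a →
      Ω.toWord.getLast? = some b → a.1 ≠ b.1) (h : Ω.toWord.length = t)
    (f : Q × ZMod t → Fin n) (hf : Function.Injective f) (j : Fin k) :
    Peelable (edges (fun p => cycLetter Ω.toWord h p.2) (stepPerm ν) f j) ∧
    (edges (fun p => cycLetter Ω.toWord h p.2) (stepPerm ν) f j).card =
      (Finset.univ.filter fun p : Q × ZMod t => (cycLetter Ω.toWord h p.2).1 = j).card := by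
  have hred := cycLetter_reduced hends h
  unfold edges
  by_cases hj : (cycLetter Ω.toWord h 0).1 = j
  · -- the letter does not end the word, so along its edges the position increases
    refine peelable_of_height_lt hf (fun p => hred p.2) j (fun p => p.2.val) (fun p hp => ?_) _
      (fun p hp => (Finset.mem_filter.1 hp).2)
    change p.2.val < (p.2 + 1).val
    have hlt := ZMod.val_lt p.2
    rcases Nat.lt_or_ge (p.2.val + 1) t with h1 | h1
    · rw [zmod_val_add_one h1]; omega
    · exact absurd (hj.trans hp.symm) (cycLetter_ends_ne hends h (by omega))
  · -- the letter does not begin the word, so before its edges the position increases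
    refine peelable_of_height_inv_lt hf (fun p => hred p.2) j (fun p => p.2.val) (fun p hp => ?_) _
      (fun p hp => (Finset.mem_filter.1 hp).2)
    change (p.2 - 1).val < p.2.val
    have hlt := ZMod.val_lt (p.2 - 1)
    rcases Nat.lt_or_ge ((p.2 - 1).val + 1) t with h1 | h1
    · have := zmod_val_add_one h1
      rw [sub_add_cancel] at this
      omega
    · have := zmod_add_one_eq_zero (x := p.2 - 1) (by omega)
      rw [sub_add_cancel] at this
      rw [this] at hp
      exact absurd hp hj

end Word

/-! ### Counting cycles by closed trajectories -/

section Counting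

lemma card_filter_injective (α : Type*) [Fintype α] [DecidableEq α] (n : ℕ) :
    (Finset.univ.filter fun f : α → Fin n => Function.Injective f).card =
      n.descFactorial (Fintype.card α) := by
  rw [← Fintype.card_subtype, Fintype.card_congr (Equiv.subtypeInjectiveEquivEmbedding α (Fin n)),
    Fintype.card_embedding_eq, Fintype.card_fin]

variable {k n t : ℕ} [NeZero t]

lemma lift_drop {Ω : FreeGroup (Fin k)} (h : Ω.toWord.length = t) (σ : Fin k → Equiv.Perm (Fin n))
    (x : ZMod t) :
    FreeGroup.lift σ (FreeGroup.mk (Ω.toWord.drop x.val)) =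
      act σ (cycLetter Ω.toWord h x) *
        FreeGroup.lift σ (FreeGroup.mk (Ω.toWord.drop (x.val + 1))) := by
  rw [FreeGroup.lift_mk, FreeGroup.lift_mk, List.drop_eq_getElem_cons (h.symm ▸ ZMod.val_lt x),
    List.map_cons, List.prod_cons]
  rfl

/-- Along a closed trajectory the position `x` is obtained from the next beginning of the word by
applying the letters from `x` on. -/
lemma trajectory_eq {Q : Type*} (ν : Equiv.Perm Q) {Ω : FreeGroup (Fin k)}
    (h : Ω.toWord.length = t) (σ : Fin k → Equiv.Perm (Fin n)) {f : Q × ZMod t → Fin n}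
    (hf : ∀ p, act σ (cycLetter Ω.toWord h p.2) (f (stepPerm ν p)) = f p) (q : Q) (x : ZMod t) :
    f (q, x) = FreeGroup.lift σ (FreeGroup.mk (Ω.toWord.drop x.val)) (f (ν q, 0)) := by
  obtain ⟨r, hr⟩ : ∃ r, x.val + r + 1 = t := ⟨t - x.val - 1, by have := ZMod.val_lt x; omega⟩
  induction r generalizing x with
  | zero =>
    have h1 := zmod_add_one_eq_zero hr
    rw [lift_drop h, List.drop_eq_nil_of_le (by omega), ← hf]
    simp [stepPerm, h1, ← FreeGroup.one_eq_mk]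
  | succ r ih =>
    have h1 : (x + 1).val = x.val + 1 := zmod_val_add_one (by omega)
    have h2 : x + 1 ≠ 0 := fun h0 => by rw [h0, ZMod.val_zero] at h1; omega
    rw [lift_drop h, ← hf, Equiv.Perm.mul_apply, ← h1, ← ih (x + 1) (by omega)]
    simp [stepPerm, h2]

open Classical in
/-- Closed trajectories of the letters correspond to closed trajectories of the word. -/
lemma card_trajectories {Q : Type*} [Fintype Q] (ν : Equiv.Perm Q) {Ω : FreeGroup (Fin k)}
    (h : Ω.toWord.length = t) (σ : Fin k → Equiv.Perm (Fin n)) :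
    (Finset.univ.filter fun f : Q × ZMod t → Fin n =>
      (Function.Injective fun q => f (q, 0)) ∧
        ∀ p, act σ (cycLetter Ω.toWord h p.2) (f (stepPerm ν p)) = f p).card =
    (Finset.univ.filter fun g : Q → Fin n =>
      Function.Injective g ∧ ∀ q, FreeGroup.lift σ Ω (g (ν q)) = g q).card := by
  have hzero : ∀ y, FreeGroup.lift σ (FreeGroup.mk (Ω.toWord.drop (0 : ZMod t).val)) y =
      FreeGroup.lift σ Ω y := by
    intro y
    rw [ZMod.val_zero, List.drop_zero, FreeGroup.mk_toWord]
  refine Finset.card_nbij' (fun f q => f (q, 0))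
    (fun g p => FreeGroup.lift σ (FreeGroup.mk (Ω.toWord.drop p.2.val)) (g (ν p.1))) ?_ ?_ ?_ ?_
  · intro f hf
    simp only [Finset.coe_filter, Finset.mem_univ, true_and, Set.mem_ofPred_eq] at hf ⊢
    refine ⟨hf.1, fun q => ?_⟩
    rw [trajectory_eq ν h σ hf.2 q 0, hzero]
  · intro g hg
    simp only [Finset.coe_filter, Finset.mem_univ, true_and, Set.mem_ofPred_eq] at hg ⊢
    refine ⟨?_, ?_⟩
    · simp only [hzero, hg.2]
      exact hg.1
    · rintro ⟨q, x⟩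
      have hx := ZMod.val_lt x
      rw [lift_drop h σ x, Equiv.Perm.mul_apply]
      congr 1
      rcases Nat.lt_or_ge (x.val + 1) t with h1 | h1
      · have h2 := zmod_val_add_one h1
        have h3 : x + 1 ≠ 0 := fun h0 => by rw [h0, ZMod.val_zero] at h2; omega
        simp [stepPerm, h3, h2]
      · have h3 := zmod_add_one_eq_zero (x := x) (by omega)
        rw [List.drop_eq_nil_of_le (i := x.val + 1) (by omega)]
        simp only [stepPerm, Equiv.coe_fn_mk, h3, if_true, hzero, hg.2]
        simp [← FreeGroup.one_eq_mk]
  · intro f hf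
    simp only [Finset.coe_filter, Finset.mem_univ, true_and, Set.mem_ofPred_eq] at hf
    funext p
    exact (trajectory_eq ν h σ hf.2 p.1 p.2).symm
  · intro g hg
    simp only [Finset.coe_filter, Finset.mem_univ, true_and, Set.mem_ofPred_eq] at hg
    funext q
    simp only [hzero, hg.2]

/-- The chosen points lie in pairwise distinct cycles of prescribed lengths. -/
def InCycles {n m : ℕ} (μ : Fin m → ℕ) (W : Equiv.Perm (Fin n)) (g₀ : Fin m → Fin n) : Prop :=
  (∀ i, cycLen W (g₀ i) = μ i) ∧ ∀ i j, i ≠ j → ¬ W.SameCycle (g₀ i) (g₀ j)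

/-- Stepping back by one in each of the index cycles. -/
def backPerm {m : ℕ} (μ : Fin m → ℕ) : Equiv.Perm (Σ i, ZMod (μ i)) :=
  Equiv.sigmaCongrRight fun _ => Equiv.subRight 1

lemma InCycles.injective {n m : ℕ} {μ : Fin m → ℕ} {W : Equiv.Perm (Fin n)} {g₀ : Fin m → Fin n}
    (h : InCycles μ W g₀) : Function.Injective g₀ := by
  intro i j hij
  by_contra hne
  exact h.2 i j hne (hij ▸ Equiv.Perm.SameCycle.refl _ _)

lemma closed_eq_pow {m : ℕ} {μ : Fin m → ℕ} {W : Equiv.Perm (Fin n)}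
    {g : (Σ i, ZMod (μ i)) → Fin n} (hg : ∀ q, W (g (backPerm μ q)) = g q) (i : Fin m) (s : ℕ) :
    g ⟨i, (s : ZMod (μ i))⟩ = (W ^ s) (g ⟨i, 0⟩) := by
  induction s with
  | zero => simp
  | succ s ih =>
    rw [pow_succ', Equiv.Perm.mul_apply, ← ih, ← hg ⟨i, _⟩]
    congr 2
    simp [backPerm]

lemma pow_apply_eq_of_natCast_eq {W : Equiv.Perm (Fin n)} {x : Fin n} {c : ℕ}
    (hc : cycLen W x = c) {a b : ℕ} (hab : (a : ZMod c) = b) : (W ^ a) x = (W ^ b) x := by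
  have h1 : a % c = b % c := (ZMod.natCast_eq_natCast_iff' a b c).1 hab
  rw [Equiv.Perm.coe_pow, Equiv.Perm.coe_pow, ← Function.iterate_mod_minimalPeriod_eq (n := a),
    ← Function.iterate_mod_minimalPeriod_eq (n := b)]
  change W^[a % cycLen W x] x = W^[b % cycLen W x] x
  rw [hc, h1]

open Classical in
/-- Closed trajectories of the word are determined by their starting points, which lie in distinct
cycles of the prescribed lengths. -/
lemma card_closed {m : ℕ} (μ : Fin m → ℕ) [∀ i, NeZero (μ i)] (W : Equiv.Perm (Fin n)) :
    (Finset.univ.filter fun g : (Σ i, ZMod (μ i)) → Fin n =>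
      Function.Injective g ∧ ∀ q, W (g (backPerm μ q)) = g q).card =
    (Finset.univ.filter fun g₀ : Fin m → Fin n => InCycles μ W g₀).card := by
  refine Finset.card_nbij' (fun g i => g ⟨i, 0⟩) (fun g₀ q => (W ^ q.2.val) (g₀ q.1)) ?_ ?_ ?_ ?_
  · intro g hg
    simp only [Finset.coe_filter, Finset.mem_univ, true_and, Set.mem_ofPred_eq] at hg ⊢
    obtain ⟨hinj, hg⟩ := hg
    refine ⟨fun i => ?_, fun i j hij hs => ?_⟩
    · have key : ∀ s : ℕ, (W ^ s) (g ⟨i, 0⟩) = g ⟨i, 0⟩ ↔ μ i ∣ s := by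
        intro s
        rw [← closed_eq_pow hg, hinj.eq_iff, ← ZMod.natCast_eq_zero_iff]
        simp
      refine Nat.dvd_antisymm ?_ ?_
      · refine Function.isPeriodicPt_iff_minimalPeriod_dvd.1 ?_
        change W^[μ i] _ = _
        rw [← Equiv.Perm.coe_pow]
        exact (key _).2 dvd_rfl
      · refine (key _).1 ?_
        rw [Equiv.Perm.coe_pow]
        exact Function.iterate_minimalPeriod
    · obtain ⟨s, hs⟩ := hs.exists_nat_pow_eq
      rw [← closed_eq_pow hg] at hs
      exact hij (Sigma.mk.inj_iff.1 (hinj hs)).1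
  · intro g₀ hg
    simp only [Finset.coe_filter, Finset.mem_univ, true_and, Set.mem_ofPred_eq] at hg ⊢
    refine ⟨?_, ?_⟩
    · rintro ⟨i, a⟩ ⟨j, b⟩ hab
      simp only at hab
      have hij : i = j := by
        by_contra hne
        refine hg.2 i j hne ?_
        rw [← Equiv.Perm.sameCycle_pow_left (n := a.val), hab, Equiv.Perm.sameCycle_pow_left]
      subst hij
      have ha : a.val < Function.minimalPeriod W (g₀ i) := by
        change _ < cycLen W (g₀ i); rw [hg.1]; exact ZMod.val_lt a
      have hb : b.val < Function.minimalPeriod W (g₀ i) := by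
        change _ < cycLen W (g₀ i); rw [hg.1]; exact ZMod.val_lt b
      rw [Equiv.Perm.coe_pow, Equiv.Perm.coe_pow,
        Function.iterate_eq_iterate_iff_of_lt_minimalPeriod ha hb] at hab
      rw [ZMod.val_injective _ hab]
    · rintro ⟨i, a⟩
      change W ((W ^ (a - 1).val) (g₀ i)) = (W ^ a.val) (g₀ i)
      rw [← Equiv.Perm.mul_apply, ← pow_succ']
      exact pow_apply_eq_of_natCast_eq (hg.1 i) (by simp)
  · intro g hg
    simp only [Finset.coe_filter, Finset.mem_univ, true_and, Set.mem_ofPred_eq] at hg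
    funext ⟨i, a⟩
    simp only [← closed_eq_pow hg.2, ZMod.natCast_zmod_val]
  · intro g₀ hg
    funext i
    simp

lemma sameCycle_conj' (τ W : Equiv.Perm (Fin n)) (x y : Fin n) :
    (τ⁻¹ * W * τ).SameCycle x y ↔ W.SameCycle (τ x) (τ y) := by
  have := Equiv.Perm.sameCycle_conj (f := W) (g := τ⁻¹) (x := x) (y := y)
  simpa using this

lemma inCycles_conj {m : ℕ} (μ : Fin m → ℕ) (τ W : Equiv.Perm (Fin n)) (g₀ : Fin m → Fin n) :
    InCycles μ (τ⁻¹ * W * τ) g₀ ↔ InCycles μ W (τ ∘ g₀) := by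
  simp [InCycles, cycLen_conj, sameCycle_conj']

lemma lift_conj (τ : Equiv.Perm (Fin n)) (σ : Fin k → Equiv.Perm (Fin n)) (Ω : FreeGroup (Fin k)) :
    FreeGroup.lift (fun j => τ⁻¹ * σ j * τ) Ω = τ⁻¹ * FreeGroup.lift σ Ω * τ := by
  have : FreeGroup.lift (fun j => τ⁻¹ * σ j * τ) =
      (MulAut.conj τ⁻¹).toMonoidHom.comp (FreeGroup.lift σ) := by
    ext j : 1
    simp
  rw [this]
  simp

open Classical in
/-- By conjugation invariance, the probability of the event does not depend on the chosen points. -/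
lemma prob_inCycles_eq {m : ℕ} (μ : Fin m → ℕ) (Ω : FreeGroup (Fin k))
    (p : Fin k → Equiv.Perm (Fin n) → ℝ)
    (hconj : ∀ (j : Fin k) (τ σ : Equiv.Perm (Fin n)), p j (τ⁻¹ * σ * τ) = p j σ)
    {g g' : Fin m → Fin n} (hg : Function.Injective g) (hg' : Function.Injective g') :
    (∑ σ : Fin k → Equiv.Perm (Fin n),
      if InCycles μ (FreeGroup.lift σ Ω) g' then ∏ j, p j (σ j) else 0) =
    ∑ σ : Fin k → Equiv.Perm (Fin n),
      if InCycles μ (FreeGroup.lift σ Ω) g then ∏ j, p j (σ j) else 0 := by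
  obtain ⟨τ, hτ⟩ := exists_perm_of_embeddings ⟨g, hg⟩ ⟨g', hg'⟩
  refine Fintype.sum_equiv (Equiv.piCongrRight fun _ => (MulAut.conj τ⁻¹).toEquiv) _ _ fun σ => ?_
  have h1 : (Equiv.piCongrRight fun _ => (MulAut.conj τ⁻¹).toEquiv) σ =
      fun j => τ⁻¹ * σ j * τ := by
    funext j
    simp
  rw [h1, lift_conj]
  simp only [hconj]
  refine if_congr ?_ rfl rfl
  rw [inCycles_conj, show τ ∘ g = g' from funext hτ]

open Classical in
/-- Independence: the probability that all the letters follow a given trajectory. -/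
lemma sum_compat_eq_prod {P : Type*} [Fintype P] (p : Fin k → Equiv.Perm (Fin n) → ℝ)
    (ℓ : P → Fin k × Bool) (S : Equiv.Perm P) (f : P → Fin n) :
    (∑ σ : Fin k → Equiv.Perm (Fin n),
      if ∀ q, act σ (ℓ q) (f (S q)) = f q then ∏ j, p j (σ j) else 0) =
    ∏ j, extProb (p j) (edges ℓ S f j) := by
  unfold extProb
  rw [Finset.prod_univ_sum, Fintype.piFinset_univ]
  refine Finset.sum_congr rfl fun σ _ => ?_
  simp only [compat_iff]
  split_ifs with h
  · exact Finset.prod_congr rfl fun j _ => (if_pos (h j)).symm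
  · push Not at h
    obtain ⟨j, e, he, hne⟩ := h
    exact (Finset.prod_eq_zero (Finset.mem_univ j) (if_neg fun h' => hne (h' e he))).symm

open Classical in
/-- The probability of the event, averaged over all choices of the points, is a sum over closed
trajectories. -/
lemma descFactorial_mul_prob {m : ℕ} (μ : Fin m → ℕ) [∀ i, NeZero (μ i)] {Ω : FreeGroup (Fin k)}
    (h : Ω.toWord.length = t) (p : Fin k → Equiv.Perm (Fin n) → ℝ)
    (hconj : ∀ (j : Fin k) (τ σ : Equiv.Perm (Fin n)), p j (τ⁻¹ * σ * τ) = p j σ) (hmn : m ≤ n) :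
    (n.descFactorial m : ℝ) * prob (fun σ : Fin k → Equiv.Perm (Fin n) => ∏ j, p j (σ j))
      {σ | (FreeGroup.lift σ) Ω ∈ Aset μ} =
    ∑ f ∈ Finset.univ.filter fun f : (Σ i, ZMod (μ i)) × ZMod t → Fin n =>
        Function.Injective fun q => f (q, 0),
      ∏ j, extProb (p j) (edges (fun p => cycLetter Ω.toWord h p.2) (stepPerm (backPerm μ)) f j) := by
  have hA : ∀ σ : Fin k → Equiv.Perm (Fin n), (FreeGroup.lift σ Ω ∈ (Aset μ : Set _)) ↔
      InCycles μ (FreeGroup.lift σ Ω) (Fin.castLE hmn) := by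
    intro σ
    have hlt : ∀ i : Fin m, (i : ℕ) < n := fun i => i.2.trans_le hmn
    constructor
    · intro h
      exact ⟨fun i => h.1 i (hlt i), fun i j hij => h.2 i j hij (hlt i) (hlt j)⟩
    · intro h
      exact ⟨fun i _ => h.1 i, fun i j hij _ _ => h.2 i j hij⟩
  have hprob : prob (fun σ : Fin k → Equiv.Perm (Fin n) => ∏ j, p j (σ j))
      {σ | (FreeGroup.lift σ) Ω ∈ Aset μ} = ∑ σ : Fin k → Equiv.Perm (Fin n),
      if InCycles μ (FreeGroup.lift σ Ω) (Fin.castLE hmn) then ∏ j, p j (σ j) else 0 := by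
    unfold prob
    refine Finset.sum_congr rfl fun σ _ => ?_
    rw [Set.indicator_apply]
    exact if_congr (hA σ) rfl rfl
  have hcard := card_filter_injective (Fin m) n
  rw [Fintype.card_fin] at hcard
  have hs : ∀ g' ∈ Finset.univ.filter fun g' : Fin m → Fin n => Function.Injective g',
      (∑ σ : Fin k → Equiv.Perm (Fin n),
        if InCycles μ (FreeGroup.lift σ Ω) (Fin.castLE hmn) then ∏ j, p j (σ j) else 0) =
      ∑ σ : Fin k → Equiv.Perm (Fin n),
        if InCycles μ (FreeGroup.lift σ Ω) g' then ∏ j, p j (σ j) else 0 := fun g' hg' =>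
    (prob_inCycles_eq μ Ω p hconj (Fin.castLE_injective hmn) (Finset.mem_filter.1 hg').2).symm
  rw [hprob, ← hcard, ← nsmul_eq_mul, ← Finset.sum_const]
  refine (Finset.sum_congr rfl hs).trans ?_
  rw [Finset.sum_comm]
  simp only [← sum_compat_eq_prod]
  conv_rhs => rw [Finset.sum_comm]
  refine Finset.sum_congr rfl fun σ _ => ?_
  rw [← Finset.sum_filter, ← Finset.sum_filter, Finset.sum_const, Finset.sum_const,
    Finset.filter_filter, Finset.filter_filter]
  have hc : _ = (Finset.univ.filter fun g₀ : Fin m → Fin n =>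
      InCycles μ (FreeGroup.lift σ Ω) g₀).card :=
    (card_trajectories (backPerm μ) h σ).trans (by convert card_closed μ (FreeGroup.lift σ Ω))
  congr 1
  trans (Finset.univ.filter fun g₀ : Fin m → Fin n => InCycles μ (FreeGroup.lift σ Ω) g₀).card
  · exact congrArg Finset.card
      (Finset.filter_congr fun g _ => ⟨fun h => h.2, fun h => ⟨h.injective, h⟩⟩)
  · rw [← hc]
    congr!

end Counting

/-! ### Asymptotics of the weights of trajectories -/

section Asymptotics

lemma tendsto_descFactorial_div_pow (T : ℕ) :
    Tendsto (fun n : ℕ => (n.descFactorial T : ℝ) / (n : ℝ) ^ T) atTop (nhds 1) := by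
  refine (Asymptotics.isEquivalent_iff_tendsto_one ?_).1 (isEquivalent_descFactorial T)
  filter_upwards [eventually_gt_atTop 0] with n hn
  positivity

open Classical in
/-- At most `n ^ v * v ^ T` functions from `T` points to `n` points take exactly `v` values. -/
lemma card_filter_card_image_le {P : Type*} [Fintype P] (n v : ℕ) :
    (Finset.univ.filter fun f : P → Fin n => (Finset.univ.image f).card = v).card ≤
      n ^ v * v ^ Fintype.card P := by
  have hsub : (Finset.univ.filter fun f : P → Fin n => (Finset.univ.image f).card = v) ⊆
      (Finset.powersetCard v Finset.univ).biUnion fun S => Fintype.piFinset fun _ : P => S := by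
    intro f hf
    simp only [Finset.mem_biUnion, Finset.mem_powersetCard, Fintype.mem_piFinset]
    exact ⟨_, ⟨Finset.subset_univ _, (Finset.mem_filter.1 hf).2⟩,
      fun a => Finset.mem_image_of_mem f (Finset.mem_univ a)⟩
  refine (Finset.card_le_card hsub).trans (Finset.card_biUnion_le.trans ?_)
  refine (Finset.sum_le_card_nsmul _ _ (v ^ Fintype.card P) fun S hS => ?_).trans ?_
  · rw [Fintype.card_piFinset, Finset.prod_const, (Finset.mem_powersetCard.1 hS).2,
      Finset.card_univ]
  · rw [Finset.card_powersetCard, Finset.card_univ, Fintype.card_fin, smul_eq_mul]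
    exact Nat.mul_le_mul_right _ (Nat.choose_le_pow n v)

open Classical in
/-- Weights of order `n ^ (-(v + 1))` on the functions with `v` values have a total of order
`1 / n`. -/
lemma sum_le_of_card_image {P : Type*} [Fintype P] {n : ℕ} (hn : 0 < n)
    (s : Finset (P → Fin n)) (w : (P → Fin n) → ℝ) {B : ℝ} (hB : 0 ≤ B)
    (hw : ∀ f ∈ s, (n : ℝ) ^ ((Finset.univ.image f).card + 1) * w f ≤ B) :
    ∑ f ∈ s, w f ≤ (Fintype.card P + 1) * (Fintype.card P : ℝ) ^ Fintype.card P * B / n := by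
  set T := Fintype.card P with hT
  have hn' : (0 : ℝ) < n := by exact_mod_cast hn
  have hmaps : ∀ f ∈ s, (Finset.univ.image f).card ∈ Finset.range (T + 1) := fun f _ =>
    Finset.mem_range.2 (Nat.lt_succ_of_le Finset.card_image_le)
  rw [← Finset.sum_fiberwise_of_maps_to hmaps]
  have hv : ∀ v ∈ Finset.range (T + 1),
      ∑ f ∈ s.filter (fun f => (Finset.univ.image f).card = v), w f ≤ (T : ℝ) ^ T * B / n := by
    intro v hv
    have h1 : ∀ f ∈ s.filter (fun f => (Finset.univ.image f).card = v),
        w f ≤ B / (n : ℝ) ^ (v + 1) := by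
      intro f hf
      obtain ⟨hfs, rfl⟩ := Finset.mem_filter.1 hf
      rw [le_div_iff₀ (by positivity), mul_comm]
      exact hw f hfs
    refine (Finset.sum_le_card_nsmul _ _ _ h1).trans ?_
    have h2 : (s.filter (fun f => (Finset.univ.image f).card = v)).card ≤ n ^ v * T ^ T :=
      (Finset.card_le_card (Finset.filter_subset_filter _ (Finset.subset_univ s))).trans
        ((card_filter_card_image_le n v).trans (Nat.mul_le_mul_left _
          (Nat.pow_le_pow_left (Nat.lt_succ_iff.1 (Finset.mem_range.1 hv)) _)))
    have h3 : ((s.filter (fun f => (Finset.univ.image f).card = v)).card : ℝ) ≤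
        (n : ℝ) ^ v * (T : ℝ) ^ T := by exact_mod_cast h2
    rw [nsmul_eq_mul]
    calc _ ≤ (n : ℝ) ^ v * (T : ℝ) ^ T * (B / (n : ℝ) ^ (v + 1)) :=
          mul_le_mul_of_nonneg_right h3 (by positivity)
      _ = (T : ℝ) ^ T * B / n := by
        rw [pow_succ]
        field_simp
  refine (Finset.sum_le_card_nsmul _ _ _ hv).trans (le_of_eq ?_)
  rw [Finset.card_range, nsmul_eq_mul]
  push_cast
  ring

section Letters

variable {k : ℕ} {p : (n : ℕ) → Fin k → Equiv.Perm (Fin n) → ℝ}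
  (hpos : ∀ n j σ, 0 ≤ p n j σ) (hsum : ∀ n j, ∑ σ, p n j σ = 1)
  (hconj : ∀ n (j : Fin k) (τ σ : Equiv.Perm (Fin n)), p n j (τ⁻¹ * σ * τ) = p n j σ)
  (hmom : ∀ j : Fin k, ∀ (m : ℕ) (c : Fin m → ℕ), (∀ i, 1 ≤ c i) →
    ∃ C : ℝ, ∀ᶠ n in atTop,
      (∑ σ : Equiv.Perm (Fin n), p n j σ * ∏ i, (cycCount σ (c i) : ℝ)) ≤ C)
include hpos hsum hconj hmom

lemma exists_extProb_le_uniform (T : ℕ) :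
    ∃ B : ℝ, 0 ≤ B ∧ ∀ᶠ n in atTop, ∀ j, ∀ R : Finset (Fin n × Fin n), R.card ≤ T →
      (n : ℝ) ^ R.card * extProb (p n j) R ≤ B := by
  choose C hC0 hC using fun (j : Fin k) (e : ℕ) =>
    exists_extProb_le (fun n => hpos n j) (fun n => hsum n j) (fun n => hconj n j) (hmom j) e
  refine ⟨∑ j, ∑ e ∈ Finset.range (T + 1), C j e,
    Finset.sum_nonneg fun j _ => Finset.sum_nonneg fun e _ => hC0 j e, ?_⟩
  have h : ∀ᶠ n in atTop, ∀ j, ∀ e ∈ Finset.range (T + 1), ∀ R : Finset (Fin n × Fin n),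
      R.card = e → (n : ℝ) ^ e * extProb (p n j) R ≤ C j e :=
    eventually_all.2 fun j => (eventually_all_finset _).2 fun e _ => hC j e
  filter_upwards [h] with n hn j R hR
  have hR' : R.card ∈ Finset.range (T + 1) := Finset.mem_range.2 (by omega)
  calc _ ≤ C j R.card := hn j _ hR' R rfl
    _ ≤ ∑ e ∈ Finset.range (T + 1), C j e :=
      Finset.single_le_sum (f := fun e => C j e) (fun e _ => hC0 j e) hR'
    _ ≤ _ := Finset.single_le_sum (f := fun j => ∑ e ∈ Finset.range (T + 1), C j e)
      (fun j _ => Finset.sum_nonneg fun e _ => hC0 j e) (Finset.mem_univ j)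

lemma exists_extProb_peelable_uniform (e : Fin k → ℕ) :
    ∃ C : ℝ, 0 ≤ C ∧ ∀ᶠ n : ℕ in atTop, ∀ j, ∀ R : Finset (Fin n × Fin n), Peelable R →
      R.card = e j → |(n : ℝ) ^ e j * extProb (p n j) R - 1| ≤ C / n := by
  choose C hC0 hC using fun (j : Fin k) =>
    exists_extProb_peelable (fun n => hpos n j) (fun n => hsum n j) (fun n => hconj n j) (hmom j)
      (e j)
  refine ⟨∑ j, C j, Finset.sum_nonneg fun j _ => hC0 j, ?_⟩
  filter_upwards [eventually_all.2 hC] with n hn j R hR hcard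
  refine (hn j R hR hcard).trans ?_
  gcongr
  exact Finset.single_le_sum (f := C) (fun j _ => hC0 j) (Finset.mem_univ j)

variable {t : ℕ} [NeZero t] {Q : Type*} [Fintype Q] (ν : Equiv.Perm Q) {Ω : FreeGroup (Fin k)}
  (hends : ∀ a b : Fin k × Bool, Ω.toWord.head? = some a →
    Ω.toWord.getLast? = some b → a.1 ≠ b.1) (h : Ω.toWord.length = t)
include hends

open Classical in
/-- The injective trajectories contribute `1` in the limit. -/
lemma tendsto_sum_injective :
    Tendsto (fun n : ℕ => ∑ f ∈ Finset.univ.filter fun f : Q × ZMod t → Fin n =>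
        Function.Injective f,
      ∏ j, extProb (p n j) (edges (fun p => cycLetter Ω.toWord h p.2) (stepPerm ν) f j))
      atTop (nhds 1) := by
  set e : Fin k → ℕ := fun j =>
    (Finset.univ.filter fun p : Q × ZMod t => (cycLetter Ω.toWord h p.2).1 = j).card with he
  set T := Fintype.card (Q × ZMod t) with hT
  have hT : ∑ j, e j = T :=
    (Finset.card_eq_sum_card_fiberwise (f := fun p : Q × ZMod t => (cycLetter Ω.toWord h p.2).1)
      (t := Finset.univ) (fun _ _ => Finset.mem_coe.2 (Finset.mem_univ _))).symm
  obtain ⟨C, hC0, hC⟩ := exists_extProb_peelable_uniform hpos hsum hconj hmom e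
  have hlim : Tendsto (fun n : ℕ => C / (n : ℝ)) atTop (nhds 0) :=
    tendsto_const_div_atTop_nhds_zero_nat C
  have hD := tendsto_descFactorial_div_pow T
  have hlo : Tendsto (fun n : ℕ => (n.descFactorial T : ℝ) / (n : ℝ) ^ T * (1 - C / n) ^ k)
      atTop (nhds 1) := by
    simpa using hD.mul ((hlim.const_sub 1).pow k)
  have hhi : Tendsto (fun n : ℕ => (n.descFactorial T : ℝ) / (n : ℝ) ^ T * (1 + C / n) ^ k)
      atTop (nhds 1) := by
    simpa using hD.mul ((hlim.const_add 1).pow k)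
  have hev : ∀ᶠ n : ℕ in atTop, 0 < n ∧ C / (n : ℝ) < 1 ∧ ∀ f : Q × ZMod t → Fin n,
      Function.Injective f →
      (1 - C / n) ^ k / (n : ℝ) ^ T ≤
        ∏ j, extProb (p n j) (edges (fun p => cycLetter Ω.toWord h p.2) (stepPerm ν) f j) ∧
      ∏ j, extProb (p n j) (edges (fun p => cycLetter Ω.toWord h p.2) (stepPerm ν) f j) ≤
        (1 + C / n) ^ k / (n : ℝ) ^ T := by
    filter_upwards [hC, eventually_gt_atTop 0, hlim.eventually_lt_const one_pos]
      with n hCn hn hlt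
    refine ⟨hn, hlt, fun f hf => ?_⟩
    have hn' : (0 : ℝ) < n := by exact_mod_cast hn
    have hj : ∀ j, |(n : ℝ) ^ e j * extProb (p n j)
        (edges (fun p => cycLetter Ω.toWord h p.2) (stepPerm ν) f j) - 1| ≤ C / n := fun j =>
      hCn j _ (peelable_edges ν hends h f hf j).1 (peelable_edges ν hends h f hf j).2
    have hprod : (∏ j, extProb (p n j)
          (edges (fun p => cycLetter Ω.toWord h p.2) (stepPerm ν) f j)) * (n : ℝ) ^ T =
        ∏ j, ((n : ℝ) ^ e j * extProb (p n j)
          (edges (fun p => cycLetter Ω.toWord h p.2) (stepPerm ν) f j)) := by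
      rw [Finset.prod_mul_distrib, Finset.prod_pow_eq_pow_sum, hT, mul_comm]
    have hconst : ∀ x : ℝ, x ^ k = ∏ _j : Fin k, x := fun x => by simp
    rw [div_le_iff₀ (by positivity), le_div_iff₀ (by positivity), hprod, hconst, hconst]
    refine ⟨Finset.prod_le_prod (fun j _ => by linarith) fun j _ => ?_,
      Finset.prod_le_prod (fun j _ => ?_) fun j _ => ?_⟩
    · linarith [(abs_le.1 (hj j)).1]
    · exact mul_nonneg (by positivity) (extProb_nonneg (hpos n j) _)
    · linarith [(abs_le.1 (hj j)).2]
  have hcard : ∀ n : ℕ, ((Finset.univ.filter fun f : Q × ZMod t → Fin n =>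
      Function.Injective f).card : ℝ) = n.descFactorial T := fun n => by
    rw [← card_filter_injective (Q × ZMod t) n]
  refine tendsto_of_tendsto_of_tendsto_of_le_of_le' hlo hhi ?_ ?_
  · filter_upwards [hev] with n hn
    refine le_trans (le_of_eq ?_) (Finset.card_nsmul_le_sum _ _ _
      fun f hf => (hn.2.2 f (Finset.mem_filter.1 hf).2).1)
    rw [nsmul_eq_mul, hcard]
    ring
  · filter_upwards [hev] with n hn
    refine (Finset.sum_le_card_nsmul _ _ _
      fun f hf => (hn.2.2 f (Finset.mem_filter.1 hf).2).2).trans (le_of_eq ?_)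
    rw [nsmul_eq_mul, hcard]
    ring

open Classical in
/-- The non-injective trajectories are negligible. -/
lemma tendsto_sum_not_injective
    (hΩ : ¬ ∃ (Ω' : FreeGroup (Fin k)) (e : ℕ), 2 ≤ e ∧ Ω = Ω' ^ e) :
    Tendsto (fun n : ℕ => ∑ f ∈ Finset.univ.filter fun f : Q × ZMod t → Fin n =>
        (Function.Injective fun q => f (q, 0)) ∧ ¬ Function.Injective f,
      ∏ j, extProb (p n j) (edges (fun p => cycLetter Ω.toWord h p.2) (stepPerm ν) f j))
      atTop (nhds 0) := by
  set T := Fintype.card (Q × ZMod t) with hT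
  obtain ⟨B, hB0, hB⟩ := exists_extProb_le_uniform hpos hsum hconj hmom T
  have hlim := tendsto_const_div_atTop_nhds_zero_nat (𝕜 := ℝ) ((T + 1) * (T : ℝ) ^ T * B ^ k)
  refine squeeze_zero' (Eventually.of_forall fun n => Finset.sum_nonneg fun f _ =>
    Finset.prod_nonneg fun j _ => extProb_nonneg (hpos n j) _) ?_ hlim
  filter_upwards [hB, eventually_gt_atTop 0] with n hBn hn
  have hn' : (1 : ℝ) ≤ n := by exact_mod_cast hn
  refine sum_le_of_card_image hn _ _ (by positivity) fun f hf => ?_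
  obtain ⟨-, hf0, hf⟩ := Finset.mem_filter.1 hf
  rcases eq_or_ne (∏ j, extProb (p n j)
    (edges (fun p => cycLetter Ω.toWord h p.2) (stepPerm ν) f j)) 0 with h0 | h0
  · rw [h0, mul_zero]
    positivity
  · choose σ hσ using fun j => exists_of_extProb_ne_zero (Finset.prod_ne_zero_iff.1 h0 j
      (Finset.mem_univ j))
    have hlt := card_image_lt_card_edges ν hΩ hends h f hf0 hf σ ((compat_iff σ _ _ f).2 hσ)
    calc _ ≤ (n : ℝ) ^ (∑ j, (edges (fun p => cycLetter Ω.toWord h p.2) (stepPerm ν) f j).card) *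
          ∏ j, extProb (p n j) (edges (fun p => cycLetter Ω.toWord h p.2) (stepPerm ν) f j) := by
          refine mul_le_mul_of_nonneg_right (pow_le_pow_right₀ hn' hlt)
            (Finset.prod_nonneg fun j _ => extProb_nonneg (hpos n j) _)
      _ = ∏ j, ((n : ℝ) ^ (edges (fun p => cycLetter Ω.toWord h p.2) (stepPerm ν) f j).card *
          extProb (p n j) (edges (fun p => cycLetter Ω.toWord h p.2) (stepPerm ν) f j)) := by
        rw [Finset.prod_mul_distrib, Finset.prod_pow_eq_pow_sum]
      _ ≤ ∏ _j : Fin k, B := Finset.prod_le_prod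
        (fun j _ => mul_nonneg (by positivity) (extProb_nonneg (hpos n j) _))
        fun j _ => hBn j _ (Finset.card_image_le.trans (Finset.card_filter_le _ _))
      _ = B ^ k := by simp

end Letters

end Asymptotics

/-- For `Ω ∈ F_k` not a proper power, cyclically reduced with two distinct extremal
letters, and independent conjugation-invariant permutations `σ_{1,n},…,σ_{k,n}` with
finite limsup of all joint small-cycle moments: for every Young diagram `μ`,
`n^{ℓ(μ)}·P(Ω(σ_{1,n},…,σ_{k,n}) ∈ A^μ) → 1`; equivalently, this probability equals
the corresponding probability for uniform permutations, up to a `(1+o(1))` factor. -/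
theorem conj_invariant_word_Aset_probability
    {k : ℕ} (Ω : FreeGroup (Fin k)) (hΩ1 : Ω ≠ 1)
    (hΩ : ¬ ∃ (Ω' : FreeGroup (Fin k)) (e : ℕ), 2 ≤ e ∧ Ω = Ω' ^ e)
    (hends : ∀ a b : Fin k × Bool, Ω.toWord.head? = some a →
      Ω.toWord.getLast? = some b → a.1 ≠ b.1)
    (p : (n : ℕ) → Fin k → Equiv.Perm (Fin n) → ℝ)
    (hpos : ∀ n j σ, 0 ≤ p n j σ)
    (hsum : ∀ n j, ∑ σ, p n j σ = 1)
    (hconj : ∀ n (j : Fin k) (τ σ : Equiv.Perm (Fin n)), p n j (τ⁻¹ * σ * τ) = p n j σ)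
    (hmom : ∀ j : Fin k, ∀ (m : ℕ) (c : Fin m → ℕ), (∀ i, 1 ≤ c i) →
      ∃ C : ℝ, ∀ᶠ n in atTop,
        (∑ σ : Equiv.Perm (Fin n), p n j σ * ∏ i, (cycCount σ (c i) : ℝ)) ≤ C)
    (m : ℕ) (μ : Fin m → ℕ) (hμ : ∀ i, 1 ≤ μ i) (hmono : Antitone μ) :
    Tendsto (fun n : ℕ => (n : ℝ) ^ m *
        prob (fun σ : Fin k → Equiv.Perm (Fin n) => ∏ j, p n j (σ j))
          {σ | (FreeGroup.lift σ) Ω ∈ Aset μ})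
      atTop (nhds 1) := by
  classical
  obtain ⟨t, h⟩ : ∃ t, Ω.toWord.length = t := ⟨_, rfl⟩
  have : NeZero t := ⟨fun h0 => hΩ1 (FreeGroup.toWord_eq_nil_iff.1
    (List.length_eq_zero_iff.1 (h.trans h0)))⟩
  have : ∀ i, NeZero (μ i) := fun i => ⟨Nat.one_le_iff_ne_zero.1 (hμ i)⟩
  have hinj := tendsto_sum_injective hpos hsum hconj hmom (backPerm μ) hends h
  have hnot := tendsto_sum_not_injective hpos hsum hconj hmom (backPerm μ) hends h hΩ
  have hdiv := (hinj.add hnot).div (tendsto_descFactorial_div_pow m) one_ne_zero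
  rw [add_zero, div_one] at hdiv
  refine hdiv.congr' ?_
  filter_upwards [eventually_gt_atTop 0, eventually_ge_atTop m] with n hn hmn
  have hd : (0 : ℝ) < n.descFactorial m := by exact_mod_cast Nat.descFactorial_pos.2 hmn
  have hn' : (0 : ℝ) < n := by exact_mod_cast hn
  have key := descFactorial_mul_prob μ h (p n) (hconj n) hmn
  rw [← Finset.sum_filter_add_sum_filter_not _ (fun f => Function.Injective f),
    Finset.filter_filter, Finset.filter_filter] at key
  have hfil : (Finset.univ.filter fun f : (Σ i, ZMod (μ i)) × ZMod t → Fin n =>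
      (Function.Injective fun q => f (q, 0)) ∧ Function.Injective f) =
      Finset.univ.filter fun f => Function.Injective f :=
    Finset.filter_congr fun f _ =>
      ⟨fun hf => hf.2, fun hf => ⟨fun a b hab => (Prod.mk.inj (hf hab)).1, hf⟩⟩
  simp only [Pi.div_apply]
  rw [div_eq_iff (by positivity)]
  refine Eq.trans ?_ (key.symm.trans ?_)
  · rw [hfil]
    congr!
  · field_simp
end
end

section
/- Let μ be a Young diagram and let n > |μ|. If ρ_n is a uniformly distributed random permutation of {1,…,n}, then P(ρ_n ∈ A^{μ}) = (n − ℓ(μ))!/n!, where A^{μ} := {σ ∈ S_n : c_i(σ) = μ_i for all 1 ≤ i ≤ ℓ(μ), and the points 1,…,ℓ(μ) lie in pairwise distinct cycles of σ}. -/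
/-!
Write `σ` for a permutation of a finite type and mark some of its points by positive integers
`L a`, with `L a = 0` on the unmarked points.  If the total of the marks is at most the number of
points, the number of `σ` for which every marked point `a` lies in a cycle of length `L a`, and no
two marked points share a cycle, is `u!` with `u` the number of unmarked points (`card_good`).  The
required probability is the case where the first `m` points carry the marks `μ`.

The count is by induction on the number of points.  If there is no mark, all permutations qualify.
Otherwise call one marked point `none` and write each permutation of `Option β` as
`swap none o * optionCongr τ` with `o` the image of `none` (`Equiv.Perm.decomposeOption`); `τ` is
the permutation with `none` cut out of its cycle.

* If `L none = 1`, then `o = none` and `τ` is any good permutation for the remaining marks.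
* If `L none = k + 2`, then `o = some y` with `y` unmarked, and `τ` is any good permutation for the
  marks on `β` together with the new mark `k + 1` at `y`.  There are `u` choices of `y`, each
  leaving `u - 1` unmarked points, and `u * (u - 1)! = u!`.  That `u > 0` comes from the bound on
  the total of the marks.

Cycle lengths are handled as cardinalities of cycles, so that both conditions reduce to describing
the relation `SameCycle` before and after cutting out `none` (`sameCycle_insert`).
-/

noncomputable section

open Equiv Equiv.Perm

/-- The cycle of `σ` through `a`, fixed points being cycles of length one. -/
def cyc {α : Type} (σ : Perm α) (a : α) : Set α := {b | σ.SameCycle a b}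

/-- `Good L σ`: each point `a` with nonzero mark `L a` lies in a cycle of length `L a`, and distinct
points with nonzero marks lie in distinct cycles. -/
def Good {α : Type} (L : α → ℕ) (σ : Perm α) : Prop :=
  ∀ a, L a ≠ 0 → (cyc σ a).ncard = L a ∧ ∀ b, L b ≠ 0 → σ.SameCycle a b → a = b

/-! ### Cycles and transport along bijections -/

theorem cycLen_eq {n : ℕ} (σ : Perm (Fin n)) (x : Fin n) : cycLen σ x = (cyc σ x).ncard := by
  classical
  have h := MulAction.minimalPeriod_eq_card (a := σ) (b := x)
  have h2 : (MulAction.orbit (Subgroup.zpowers σ) x : Set (Fin n)) = cyc σ x := by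
    ext b
    simp [cyc, MulAction.mem_orbit_iff, SameCycle, Subgroup.smul_def]
  rw [← Nat.card_eq_fintype_card] at h
  rw [← h2]
  exact h

/-- `SameCycle` is the least equivalence relation relating each point to its image. -/
theorem sameCycle_lift {α : Type} {r : α → α → Prop} (hr : Equivalence r) {σ : Perm α}
    (h : ∀ a, r a (σ a)) {a b : α} (hab : σ.SameCycle a b) : r a b := by
  obtain ⟨k, rfl⟩ := hab
  induction k using Int.induction_on with
  | zero => exact hr.refl _
  | succ i ih =>
    rw [add_comm, zpow_add, zpow_one]
    exact hr.trans ih (h _)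
  | pred i ih =>
    refine hr.trans ih (hr.symm ?_)
    have := h ((σ ^ (-(i : ℤ) - 1)) a)
    rwa [← Perm.mul_apply, ← zpow_one_add, add_sub_cancel] at this

theorem sameCycle_equivalence {α β : Type} (σ : Perm β) (f : α → β) :
    Equivalence fun a b => σ.SameCycle (f a) (f b) :=
  ⟨fun _ => SameCycle.refl _ _, fun h => h.symm, fun h h' => h.trans h'⟩

theorem sameCycle_permCongr {α β : Type} (e : α ≃ β) (σ : Perm α) (a b : α) :
    (e.permCongr σ).SameCycle (e a) (e b) ↔ σ.SameCycle a b := by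
  constructor
  · intro h
    simpa using sameCycle_lift (sameCycle_equivalence σ e.symm)
      (fun c => by simpa using (SameCycle.refl σ (e.symm c)).apply_right) h
  · refine fun h => sameCycle_lift (sameCycle_equivalence (e.permCongr σ) e) (fun c => ?_) h
    have := (SameCycle.refl (e.permCongr σ) (e c)).apply_right
    simpa [Equiv.permCongr_apply] using this

theorem good_permCongr {α β : Type} (e : α ≃ β) (L : β → ℕ) (σ : Perm α) :
    Good (L ∘ e) σ ↔ Good L (e.permCongr σ) := by
  have hc (a : α) : cyc (e.permCongr σ) (e a) = e '' cyc σ a := by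
    ext b
    obtain ⟨b, rfl⟩ := e.surjective b
    simp [cyc, sameCycle_permCongr]
  unfold Good
  rw [e.surjective.forall]
  refine forall_congr' fun a => ?_
  rw [e.surjective.forall, hc, Set.ncard_image_of_injective _ e.injective]
  simp [sameCycle_permCongr]

theorem card_good_congr {α β : Type} (e : α ≃ β) (L : β → ℕ) :
    Nat.card {σ : Perm α // Good (L ∘ e) σ} = Nat.card {σ : Perm β // Good L σ} :=
  Nat.card_congr (e.permCongr.subtypeEquiv fun σ => good_permCongr e L σ)

/-! ### Inserting a point into a permutation -/

section Option

variable {β : Type} [DecidableEq β]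

/-- Inserting `none` just before `y` in its cycle changes `SameCycle` only by putting `none` in the
cycle of `y`. -/
theorem sameCycle_insert (y : β) (τ : Perm β) (p q : Option β) :
    (swap none (some y) * optionCongr τ).SameCycle p q ↔
      τ.SameCycle (p.getD y) (q.getD y) := by
  set σ : Perm (Option β) := swap none (some y) * optionCongr τ with hσ
  have h0 : σ none = some y := by simp [hσ]
  have h1 (b : β) (hb : τ b = y) : σ (some b) = none := by simp [hσ, hb]
  have h2 (b : β) (hb : τ b ≠ y) : σ (some b) = some (τ b) := by
    simp [hσ, swap_apply_of_ne_of_ne, hb]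
  have hstep (c : Option β) : σ.SameCycle c (σ c) := (SameCycle.refl σ c).apply_right
  have hnone : σ.SameCycle none (some y) := h0 ▸ hstep none
  constructor
  · refine sameCycle_lift (sameCycle_equivalence τ fun p : Option β => p.getD y) (fun c => ?_)
    rcases c with _ | b
    · simp [h0, SameCycle.refl]
    · have hb := (SameCycle.refl τ b).apply_right
      by_cases h : τ b = y
      · simpa [h1 b h, ← h] using hb
      · simpa [h2 b h] using hb
  · have hp (p : Option β) : σ.SameCycle p (some (p.getD y)) := by
      rcases p with _ | b
      · exact hnone
      · exact SameCycle.refl _ _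
    intro h
    refine (hp p).trans (SameCycle.trans ?_ (hp q).symm)
    refine sameCycle_lift (sameCycle_equivalence σ some) (fun b => ?_) h
    have hb := hstep (some b)
    by_cases h : τ b = y
    · rw [h1 b h] at hb
      rw [h]
      exact hb.trans hnone
    · rwa [h2 b h] at hb

theorem sameCycle_optionCongr {β : Type} (τ : Perm β) (p q : Option β) :
    SameCycle (optionCongr τ : Perm (Option β)) p q ↔ Option.Rel τ.SameCycle p q := by
  set σ : Perm (Option β) := optionCongr τ with hσ
  constructor
  · refine sameCycle_lift ⟨?_, ?_, ?_⟩ ?_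
    · rintro (_ | b)
      · exact .none
      · exact .some (SameCycle.refl _ _)
    · rintro _ _ (h | _)
      · exact .some h.symm
      · exact .none
    · rintro _ _ _ (h | _) (h' | _)
      · exact .some (h.trans h')
      · exact .none
    · rintro (_ | b)
      · exact .none
      · exact .some (SameCycle.refl _ _).apply_right
  · rintro (h | _)
    · refine sameCycle_lift (sameCycle_equivalence σ some) (fun b => ?_) h
      simpa [hσ] using (SameCycle.refl σ (some b)).apply_right
    · exact SameCycle.refl _ _

theorem ncard_cyc_insert_of_sameCycle [Finite β] (y : β) (τ : Perm β) (p : Option β)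
    (h : τ.SameCycle (p.getD y) y) :
    (cyc (swap none (some y) * optionCongr τ) p).ncard = (cyc τ (p.getD y)).ncard + 1 := by
  have : cyc (swap none (some y) * optionCongr τ) p =
      insert none (some '' cyc τ (p.getD y)) := by
    ext (_ | b) <;> simp [cyc, sameCycle_insert, h]
  rw [this, Set.ncard_insert_of_notMem (by simp) (Set.toFinite _),
    Set.ncard_image_of_injective _ (Option.some_injective _)]

theorem ncard_cyc_insert_of_not_sameCycle (y : β) (τ : Perm β) (a : β)
    (h : ¬ τ.SameCycle a y) :
    (cyc (swap none (some y) * optionCongr τ) (some a)).ncard = (cyc τ a).ncard := by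
  have : cyc (swap none (some y) * optionCongr τ) (some a) = some '' cyc τ a := by
    ext (_ | b) <;> simp [cyc, sameCycle_insert, h]
  rw [this, Set.ncard_image_of_injective _ (Option.some_injective _)]

theorem ncard_cyc_pos {β : Type} [Finite β] (τ : Perm β) (a : β) : 0 < (cyc τ a).ncard :=
  (Set.ncard_pos (Set.toFinite _)).2 ⟨a, SameCycle.refl _ _⟩

theorem ncard_cyc_optionCongr_none {β : Type} (τ : Perm β) :
    (cyc (optionCongr τ : Perm (Option β)) none).ncard = 1 := by
  have : cyc (optionCongr τ : Perm (Option β)) none = {none} := by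
    ext (_ | b) <;> simp [cyc, sameCycle_optionCongr]
  rw [this, Set.ncard_singleton]

theorem ncard_cyc_optionCongr_some {β : Type} (τ : Perm β) (a : β) :
    (cyc (optionCongr τ : Perm (Option β)) (some a)).ncard = (cyc τ a).ncard := by
  have : cyc (optionCongr τ : Perm (Option β)) (some a) = some '' cyc τ a := by
    ext (_ | b) <;> simp [cyc, sameCycle_optionCongr]
  rw [this, Set.ncard_image_of_injective _ (Option.some_injective _)]

theorem good_optionCongr {β : Type} {L : Option β → ℕ} (hL : L none ≠ 0) (τ : Perm β) :
    Good L (optionCongr τ) ↔ L none = 1 ∧ Good (L ∘ some) τ := by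
  simp [Good, Option.forall, ncard_cyc_optionCongr_none, ncard_cyc_optionCongr_some,
    sameCycle_optionCongr, hL, eq_comm]

/-- With `none` marked and inserted just before `y`, the permutation is good exactly when `none` has
a mark other than one, `y` is unmarked, and `τ` is good once `y` takes over the mark of `none`, less
one. -/
theorem good_insert [Finite β] {L : Option β → ℕ} (hL : L none ≠ 0) (y : β) (τ : Perm β) :
    Good L (swap none (some y) * optionCongr τ) ↔
      L (some y) = 0 ∧ L none ≠ 1 ∧
        Good (Function.update (L ∘ some) y (L none - 1)) τ := by
  have hpos := ncard_cyc_pos τ y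
  constructor
  · intro h
    obtain ⟨h1, h2⟩ := h none hL
    rw [ncard_cyc_insert_of_sameCycle _ _ _ (SameCycle.refl _ _)] at h1
    simp only [Option.getD_none] at h1
    have hdisj (b : β) (hb : L (some b) ≠ 0) : ¬ τ.SameCycle y b := fun hs => by
      simpa using h2 (some b) hb ((sameCycle_insert y τ none (some b)).2 hs)
    refine ⟨by_contra fun hy => hdisj y hy (SameCycle.refl _ _), by omega, fun a ha => ?_⟩
    by_cases hay : a = y
    · subst hay
      refine ⟨by simp; omega, fun b hb hs => ?_⟩
      by_contra hne
      rw [Function.update_of_ne (Ne.symm hne)] at hb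
      exact hdisj b hb hs
    · rw [Function.update_of_ne hay] at ha ⊢
      obtain ⟨h3, h4⟩ := h (some a) ha
      rw [ncard_cyc_insert_of_not_sameCycle _ _ _ fun hs => hdisj a ha hs.symm] at h3
      refine ⟨h3, fun b hb hs => ?_⟩
      by_cases hby : b = y
      · subst hby
        exact absurd hs.symm (hdisj a ha)
      · rw [Function.update_of_ne hby] at hb
        simpa using h4 (some b) hb ((sameCycle_insert y τ (some a) (some b)).2 hs)
  · rintro ⟨hy, h1, h⟩
    have hyL : Function.update (L ∘ some) y (L none - 1) y ≠ 0 := by simp; omega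
    have hupd (b : β) (hb : L (some b) ≠ 0) :
        Function.update (L ∘ some) y (L none - 1) b = L (some b) :=
      Function.update_of_ne (fun e => hb (by rw [e, hy])) _ _
    obtain ⟨h2, h3⟩ := h y hyL
    have hdisj (b : β) (hb : L (some b) ≠ 0) : ¬ τ.SameCycle y b := fun hs =>
      hb (h3 b (by rwa [hupd b hb]) hs ▸ hy)
    rw [Function.update_self] at h2
    rintro (_ | a) ha
    · refine ⟨?_, ?_⟩
      · rw [ncard_cyc_insert_of_sameCycle _ _ _ (SameCycle.refl _ _)]
        simp only [Option.getD_none]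
        omega
      · rintro (_ | b) hb hs
        · rfl
        · exact absurd ((sameCycle_insert y τ _ _).1 hs) (hdisj b hb)
    · obtain ⟨h4, h5⟩ := h a (by rwa [hupd a ha])
      refine ⟨?_, ?_⟩
      · rw [ncard_cyc_insert_of_not_sameCycle _ _ _ fun hs => hdisj a ha hs.symm, h4, hupd a ha]
      · rintro (_ | b) hb hs
        · exact absurd ((sameCycle_insert y τ _ _).1 hs).symm (hdisj a ha)
        · rw [h5 b (by rwa [hupd b hb]) ((sameCycle_insert y τ _ _).1 hs)]

end Option

/-! ### Counting -/

/-- Conditioning on the image `o` of `none`. -/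
theorem card_good_option {β : Type} [Fintype β] [DecidableEq β] (L : Option β → ℕ) :
    Nat.card {σ : Perm (Option β) // Good L σ} =
      Nat.card {τ : Perm β // Good L (optionCongr τ)} +
        ∑ y : β, Nat.card {τ : Perm β // Good L (swap none (some y) * optionCongr τ)} := by
  have e : {σ : Perm (Option β) // Good L σ} ≃
      Σ o : Option β, {τ : Perm β // Good L (swap none o * optionCongr τ)} :=
    (decomposeOption.subtypeEquiv (q := fun x => Good L (swap none x.1 * optionCongr x.2))
      fun σ => by
        have := decomposeOption.symm_apply_apply σ
        rw [decomposeOption_symm_apply] at this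
        rw [this]).trans
      (Equiv.subtypeProdEquivSigmaSubtype
        fun o τ => Good L (swap none o * optionCongr τ))
  rw [Nat.card_congr e, Nat.card_sigma, Fintype.sum_option]
  rw [Equiv.swap_self]
  rfl

/-- The number of good permutations is the factorial of the number of unmarked points. -/
theorem card_good (n : ℕ) : ∀ L : Fin n → ℕ, ∑ a, L a ≤ n →
    Nat.card {σ : Perm (Fin n) // Good L σ} = (Nat.card {a // L a = 0}).factorial := by
  induction n with
  | zero =>
    intro L _
    have : ∀ σ, Good L σ := fun σ a => a.elim0
    simp [this]
  | succ n ih =>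
    intro L hL
    by_cases h0 : ∀ a, L a = 0
    · have : ∀ σ, Good L σ := fun σ a ha => absurd (h0 a) ha
      simp [this, h0, Fintype.card_perm]
    push Not at h0
    obtain ⟨a, ha⟩ := h0
    obtain ⟨e, he⟩ : ∃ e : Option (Fin n) ≃ Fin (n + 1), e none = a :=
      ⟨(finSuccEquiv' a).symm, by simp⟩
    rw [← card_good_congr e, ← Nat.card_congr
      (e.subtypeEquiv (p := fun p => (L ∘ e) p = 0) (q := fun a => L a = 0) fun _ => Iff.rfl)]
    rw [← e.sum_comp] at hL
    replace ha : (L ∘ e) none ≠ 0 := by simpa [he] using ha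
    change ∑ p, (L ∘ e) p ≤ n + 1 at hL
    generalize L ∘ e = M at *
    rw [Fintype.sum_option] at hL
    -- `none` is marked, so the unmarked points all come from `Fin n`.
    have hu : Nat.card {p // M p = 0} = {b | M (some b) = 0}.ncard := by
      rw [← Set.ncard_image_of_injective _ (Option.some_injective _), ← Nat.card_coe_set_eq]
      congr! 2
      ext (_ | b) <;> simp [ha]
    rw [card_good_option, hu]
    simp only [good_optionCongr ha, good_insert ha]
    by_cases h1 : M none = 1
    · simp only [h1, true_and, ne_eq, not_true_eq_false, false_and, and_false]
      rw [ih (M ∘ some) (by simpa using (by omega : ∑ i, M (some i) ≤ n))]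
      rw [Finset.sum_eq_zero fun _ _ => by simp, add_zero]
      rfl
    · simp only [h1, false_and, ne_eq, not_false_eq_true, true_and]
      have hy (y : Fin n) : Nat.card {τ : Perm (Fin n) // M (some y) = 0 ∧
          Good (Function.update (M ∘ some) y (M none - 1)) τ} =
          if M (some y) = 0 then ({b | M (some b) = 0}.ncard - 1).factorial else 0 := by
        split_ifs with hy
        · simp only [hy, true_and]
          rw [ih]
          · congr 1
            rw [← Set.ncard_sdiff_singleton_of_mem (a := y) hy, ← Nat.card_coe_set_eq]
            congr! 2
            ext b
            by_cases hb : b = y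
            · subst hb
              simp
              omega
            · simp [hb]
          · have := Finset.sum_update_of_mem (Finset.mem_univ y) (M ∘ some) (M none - 1)
            rw [this]
            have h2 : ∑ x ∈ Finset.univ \ {y}, (M ∘ some) x ≤ ∑ x, M (some x) :=
              Finset.sum_le_sum_of_subset (Finset.subset_univ _)
            omega
        · simp [hy]
      -- With every point marked and `M none ≥ 2`, the marks would total at least `n + 2`.
      have hpos : {b | M (some b) = 0}.ncard ≠ 0 := by
        intro h
        rw [Set.ncard_eq_zero] at h
        have h2 : ∑ _b : Fin n, 1 ≤ ∑ b, M (some b) := Finset.sum_le_sum fun b _ =>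
          Nat.one_le_iff_ne_zero.2 fun hb => (h ▸ hb : b ∈ (∅ : Set (Fin n)))
        simp at h2
        omega
      have hcard : (Finset.univ.filter fun b : Fin n => M (some b) = 0).card =
          {b | M (some b) = 0}.ncard := by
        rw [← Set.ncard_coe_finset]
        simp
      rw [Finset.sum_congr rfl fun y _ => hy y, ← Finset.sum_filter, Finset.sum_const, hcard,
        smul_eq_mul, Nat.mul_factorial_pred hpos]
      simp

/-- For `n = m + k`, the set `A^μ` is the set of good permutations for the marks `μ` on the first
`m` points and `0` on the others. -/
theorem mem_Aset_iff {m k : ℕ} (μ : Fin m → ℕ) (hμ : ∀ i, 1 ≤ μ i) (σ : Perm (Fin (m + k))) :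
    σ ∈ Aset μ ↔ Good (Fin.append μ fun _ : Fin k => 0) σ := by
  have hpos (i : Fin m) : μ i ≠ 0 := Nat.one_le_iff_ne_zero.1 (hμ i)
  have hlt (i : Fin m) : (i : ℕ) < m + k := by omega
  have hcast (i : Fin m) : (⟨i, hlt i⟩ : Fin (m + k)) = Fin.castAdd k i := rfl
  simp only [Aset, Set.mem_ofPred_eq, hlt, forall_true_left, hcast, cycLen_eq]
  simp only [Good, Fin.forall_fin_add, Fin.append_left, Fin.append_right, ne_eq, hpos,
    not_false_eq_true, forall_true_left, not_true_eq_false, false_imp_iff, implies_true, and_true,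
    forall_and, Fin.castAdd_inj]
  refine and_congr_right fun _ => forall_congr' fun i => forall_congr' fun j => ?_
  exact not_imp_not

/-- For a Young diagram `μ` with `|μ| < n` and a uniform random permutation `ρ_n` of
`{1,…,n}`: `P(ρ_n ∈ A^μ) = (n - ℓ(μ))!/n!`. -/
theorem uniform_Aset_probability
    {n m : ℕ} (μ : Fin m → ℕ) (hμ : ∀ i, 1 ≤ μ i) (hmono : Antitone μ)
    (hn : ∑ i, μ i < n) :
    prob (fun _ : Equiv.Perm (Fin n) => ((n.factorial : ℝ))⁻¹) (Aset μ)
      = ((n - m).factorial : ℝ) / (n.factorial : ℝ) := by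
  have hm : m ≤ ∑ i, μ i := by
    simpa using Finset.sum_le_sum fun i (_ : i ∈ Finset.univ) => hμ i
  obtain ⟨k, rfl⟩ := Nat.exists_eq_add_of_le (hm.trans hn.le)
  have hz : Nat.card {a // Fin.append μ (fun _ : Fin k => 0) a = 0} = k := by
    have : {a | Fin.append μ (fun _ : Fin k => 0) a = 0} = Set.range (Fin.natAdd m) := by
      ext a
      refine Fin.addCases (fun i => ?_) (fun i => ?_) a
      · have := hμ i
        simp only [Set.mem_ofPred_eq, Fin.append_left, Set.mem_range, Fin.ext_iff, Fin.val_natAdd,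
          Fin.val_castAdd]
        constructor
        · omega
        · rintro ⟨y, hy⟩
          omega
      · simp
    change Nat.card ({a | Fin.append μ (fun _ : Fin k => 0) a = 0} : Set _) = k
    rw [this, Nat.card_range_of_injective (Fin.natAdd_injective k m), Nat.card_fin]
  have hcount := card_good (m + k) (Fin.append μ fun _ : Fin k => 0)
    (by simpa [Fin.sum_univ_add] using hn.le)
  rw [hz, ← Nat.card_congr (Equiv.subtypeEquivRight (mem_Aset_iff μ hμ))] at hcount
  classical
  rw [Nat.card_eq_fintype_card, Fintype.card_subtype] at hcount
  simp only [prob, Set.indicator_apply, ← Finset.sum_filter, Finset.sum_const, hcount, nsmul_eq_mul,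
    Nat.add_sub_cancel_left]
  rw [div_eq_mul_inv]
end
end

section
/- Let ℓ ≥ 1, γ = (γ_1,…,γ_ℓ) ∈ (ℕ*)^ℓ, and let n ≥ ℓ + Σ_{i=1}^ℓ γ_i be such that 1 − (1/n)·Σ_{i=1}^ℓ γ_i − ((ℓ−1)/(n−1))·Σ_{i=1}^ℓ γ_i > 0. Let a_{i,j} ∈ {1,…,n} (1 ≤ i ≤ ℓ, 0 ≤ j ≤ γ_i) be pairwise distinct points and E(a) := {σ ∈ S_n : σ(a_{i,j}) = a_{i,j+1} for all 1 ≤ i ≤ ℓ, 0 ≤ j < γ_i}. Then for any conjugation-invariant random permutation σ_n of {1,…,n} and a uniformly distributed permutation ρ_n of {1,…,n}: P(σ_n ∈ E(a)) ≤ P(ρ_n ∈ E(a)) / (1 − (1/n)·Σ_{i=1}^ℓ γ_i − ((ℓ−1)/(n−1))·Σ_{i=1}^ℓ γ_i). -/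
/-!
Let `Γ = ∑ γᵢ` and let `V` be the set of the `ℓ + Γ` vertices of the `ℓ` paths, so that the prescribed
points form an embedding `V ↪ Fin n`. For an arbitrary embedding `f`, let `q f` be the probability
that the permutation contains the paths drawn by `f`.

*Invariant side.* Conjugation invariance gives `q (τ ∘ f) = q f`, and `S_n` acts transitively on
embeddings, so `q` is constant. On the other hand, a path of `σ` is determined by its starting
point, so at most `n (n-1) ⋯ (n-ℓ+1)` embeddings are realised by a given `σ`. Averaging over the
`n (n-1) ⋯ (n-ℓ-Γ+1)` embeddings bounds `q` (`descFactorial_mul_prob_le`).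

*Uniform side.* The event prescribes the images of `Γ` distinct points, so its probability is
`1 / (n (n-1) ⋯ (n-Γ+1))` (`prob_uniform`).

The quotient of the two is `∏_{k<ℓ} (n-k) / (n-Γ-k)`, and the theorem reduces to an elementary
inequality, proved by induction on `ℓ` (`descFactorial_bound`).
-/

noncomputable section

/-- For `Γ ≥ 1`,
`∏_{k<ℓ} (1 - Γ/(n-k)) ≥ 1 - Γ/n - (ℓ-1)Γ/(n-1)`, with denominators cleared. -/
lemma descFactorial_bound {n G : ℕ} (hG : 1 ≤ G) {ℓ : ℕ} (hℓ : 1 ≤ ℓ) (hn : ℓ + G ≤ n) :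
    (1 - (1 / (n : ℝ)) * (G : ℝ) - (((ℓ : ℝ) - 1) / ((n : ℝ) - 1)) * (G : ℝ))
      * (n.descFactorial ℓ : ℝ) ≤ ((n - G).descFactorial ℓ : ℝ) := by
  have hn1 : (1 : ℝ) < n := by exact_mod_cast (by omega : 1 < n)
  have hG1 : (1 : ℝ) ≤ G := by exact_mod_cast hG
  induction ℓ, hℓ using Nat.le_induction with
  | base =>
    simp only [Nat.descFactorial_one, Nat.cast_one, sub_self, zero_div, zero_mul, sub_zero]
    rw [Nat.cast_sub (by omega)]
    apply le_of_eq
    field_simp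
  | succ k hk ih =>
    have ih := ih (by omega)
    have hk1 : (1 : ℝ) ≤ k := by exact_mod_cast hk
    have hkn : (k : ℝ) + 1 + G ≤ n := by exact_mod_cast hn
    rw [Nat.descFactorial_succ, Nat.descFactorial_succ, Nat.cast_mul, Nat.cast_mul,
      Nat.cast_sub (by omega), Nat.cast_sub (by omega), Nat.cast_sub (by omega)]
    set D := 1 - (1 / (n : ℝ)) * (G : ℝ) - (((k : ℝ) - 1) / ((n : ℝ) - 1)) * (G : ℝ) with hD
    set X := (n.descFactorial k : ℝ) with hX
    have hX0 : 0 ≤ X := by positivity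
    have hn0 : (0 : ℝ) < (n : ℝ) - 1 := by linarith
    have hD' : 1 - (1 / (n : ℝ)) * (G : ℝ) - ((((k + 1 : ℕ) : ℝ) - 1) / ((n : ℝ) - 1)) * (G : ℝ)
        = D - G / ((n : ℝ) - 1) := by
      rw [hD]; push_cast; field_simp; ring
    have hDle : D ≤ ((n : ℝ) - k) / ((n : ℝ) - 1) := by
      have h1 : 0 ≤ (1 / (n : ℝ)) * (G : ℝ) := by positivity
      have h2 : ((k : ℝ) - 1) / ((n : ℝ) - 1) * 1 ≤ ((k : ℝ) - 1) / ((n : ℝ) - 1) * G := by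
        apply mul_le_mul_of_nonneg_left hG1
        apply div_nonneg <;> linarith
      have h3 : ((n : ℝ) - k) / ((n : ℝ) - 1) = 1 - ((k : ℝ) - 1) / ((n : ℝ) - 1) := by
        field_simp; ring
      rw [hD, h3]; linarith
    rw [hD']
    have key : (D - G / ((n : ℝ) - 1)) * ((n : ℝ) - k) ≤ ((n : ℝ) - G - k) * D := by
      have h : (G : ℝ) * D ≤ G * (((n : ℝ) - k) / ((n : ℝ) - 1)) := by gcongr
      have h' : (G : ℝ) * (((n : ℝ) - k) / ((n : ℝ) - 1)) = G / ((n : ℝ) - 1) * ((n : ℝ) - k) := by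
        ring
      nlinarith
    calc (D - G / ((n : ℝ) - 1)) * (((n : ℝ) - k) * X)
        = ((D - G / ((n : ℝ) - 1)) * ((n : ℝ) - k)) * X := by ring
      _ ≤ (((n : ℝ) - G - k) * D) * X := by gcongr
      _ = ((n : ℝ) - G - k) * (D * X) := by ring
      _ ≤ _ := by
        apply mul_le_mul_of_nonneg_left ih
        linarith

/-- A uniform permutation maps `k` given distinct points to `k` given distinct points with
probability `1 / (n (n-1) ⋯ (n-k+1))`. -/
lemma prob_uniform {n : ℕ} {ι : Type} [Fintype ι] (f g : ι ↪ Fin n) :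
    (n.descFactorial (Fintype.card ι) : ℝ) *
      prob (fun _ : Equiv.Perm (Fin n) => ((n.factorial : ℝ))⁻¹) {σ | ∀ i, σ (f i) = g i} = 1 := by
  classical
  -- The sets `{σ | σ ∘ f = h}` partition `S_n` and are left translates of each other.
  have hconst : ∀ h : ι ↪ Fin n,
      prob (fun _ : Equiv.Perm (Fin n) => ((n.factorial : ℝ))⁻¹) {σ | ∀ i, σ (f i) = h i}
      = prob (fun _ : Equiv.Perm (Fin n) => ((n.factorial : ℝ))⁻¹) {σ | ∀ i, σ (f i) = g i} := by
    intro h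
    obtain ⟨τ, hτ⟩ := Equiv.Perm.exists_extending_pair h g h.injective g.injective
    refine Fintype.sum_equiv (Equiv.mulLeft τ) _ _ fun σ => ?_
    simp only [Set.indicator_apply, Set.mem_ofPred_eq, Equiv.coe_mulLeft, Equiv.Perm.mul_apply,
      ← hτ, EmbeddingLike.apply_eq_iff_eq]
  have hsum : ∑ h : ι ↪ Fin n,
      prob (fun _ : Equiv.Perm (Fin n) => ((n.factorial : ℝ))⁻¹) {σ | ∀ i, σ (f i) = h i} = 1 := by
    unfold prob
    rw [Finset.sum_comm]
    have : ∀ σ : Equiv.Perm (Fin n), ∑ h : ι ↪ Fin n,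
        Set.indicator {σ : Equiv.Perm (Fin n) | ∀ i, σ (f i) = h i}
          (fun _ => ((n.factorial : ℝ))⁻¹) σ = ((n.factorial : ℝ))⁻¹ := by
      intro σ
      rw [Finset.sum_eq_single (f.trans σ.toEmbedding)]
      · simp
      · intro h _ hne
        rw [Set.indicator_of_notMem]
        intro hmem
        exact hne (by ext i; simp [hmem i])
      · simp
    simp only [this, Finset.sum_const, Finset.card_univ, Fintype.card_perm, Fintype.card_fin,
      nsmul_eq_mul]
    exact mul_inv_cancel₀ (by positivity)
  simp only [hconst, Finset.sum_const, Finset.card_univ, Fintype.card_embedding_eq,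
    Fintype.card_fin, nsmul_eq_mul] at hsum
  exact hsum

/-- The event that `σ` contains the paths with `γ i` edges drawn by the embedding `f`. -/
def pathEvent {n ℓ : ℕ} (γ : Fin ℓ → ℕ) (f : (Σ i, Fin (γ i + 1)) ↪ Fin n) :
    Set (Equiv.Perm (Fin n)) :=
  {σ | ∀ s : Σ i, Fin (γ i), σ (f ⟨s.1, s.2.castSucc⟩) = f ⟨s.1, s.2.succ⟩}

/-- Double counting of the pairs (embedding of the paths, permutation realising it): a permutation
realises at most as many embeddings as there are choices of starting points. -/
lemma descFactorial_mul_prob_le {n ℓ : ℕ} (γ : Fin ℓ → ℕ) (f : (Σ i, Fin (γ i + 1)) ↪ Fin n)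
    (p : Equiv.Perm (Fin n) → ℝ) (hpos : ∀ σ, 0 ≤ p σ) (hsum : ∑ σ, p σ = 1)
    (hconj : ∀ τ σ : Equiv.Perm (Fin n), p (τ⁻¹ * σ * τ) = p σ) :
    (n.descFactorial (Fintype.card (Σ i, Fin (γ i + 1))) : ℝ) * prob p (pathEvent γ f)
      ≤ n.descFactorial ℓ := by
  classical
  have hconst : ∀ h, prob p (pathEvent γ h) = prob p (pathEvent γ f) := by
    intro h
    obtain ⟨τ, hτ⟩ := Equiv.Perm.exists_extending_pair f h f.injective h.injective
    refine Fintype.sum_equiv (MulAut.conj τ⁻¹).toEquiv _ _ fun σ => ?_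
    simp only [Set.indicator_apply, pathEvent, Set.mem_ofPred_eq, MulEquiv.toEquiv_eq_coe,
      MulEquiv.coe_toEquiv, MulAut.conj_apply, inv_inv, hconj, ← hτ, Equiv.Perm.mul_apply,
      Equiv.Perm.inv_eq_iff_eq]
  have hcount : ∀ σ : Equiv.Perm (Fin n),
      (Finset.univ.filter fun h => σ ∈ pathEvent γ h).card ≤ n.descFactorial ℓ := by
    intro σ
    let start : Fin ℓ ↪ Σ i, Fin (γ i + 1) := ⟨fun i => ⟨i, 0⟩, fun i j h => by
      simpa using congrArg Sigma.fst h⟩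
    have hcard : (Finset.univ : Finset (Fin ℓ ↪ Fin n)).card = n.descFactorial ℓ := by
      simp [Fintype.card_embedding_eq]
    rw [← hcard]
    refine Finset.card_le_card_of_injOn (fun h => start.trans h) (fun _ _ => by simp) ?_
    intro h hh h' hh' heq
    simp only [Finset.coe_filter, Finset.mem_univ, true_and, Set.mem_ofPred_eq] at hh hh'
    ext ⟨i, j⟩
    congr 1
    induction j using Fin.induction with
    | zero => exact DFunLike.congr_fun heq i
    | succ j ih => rw [← hh ⟨i, j⟩, ← hh' ⟨i, j⟩, ih]
  have htot : ∑ h, prob p (pathEvent γ h) ≤ n.descFactorial ℓ := by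
    unfold prob
    rw [Finset.sum_comm]
    calc ∑ σ, ∑ h, (pathEvent γ h).indicator p σ
        ≤ ∑ σ, (n.descFactorial ℓ : ℝ) * p σ := by
          refine Finset.sum_le_sum fun σ _ => ?_
          simp only [Set.indicator_apply]
          rw [← Finset.sum_filter, Finset.sum_const, nsmul_eq_mul]
          exact mul_le_mul_of_nonneg_right (by exact_mod_cast hcount σ) (hpos σ)
      _ = n.descFactorial ℓ := by rw [← Finset.mul_sum, hsum, mul_one]
  simp only [hconst, Finset.sum_const, Finset.card_univ, Fintype.card_embedding_eq,
    Fintype.card_fin, nsmul_eq_mul] at htot ⊢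
  exact htot

theorem conj_invariant_vs_uniform_straight
    {n ℓ : ℕ} (hℓ : 1 ≤ ℓ) (γ : Fin ℓ → ℕ) (hγ : ∀ i, 1 ≤ γ i)
    (hn : ℓ + ∑ i, γ i ≤ n)
    (hden : 0 < 1 - (1 / (n : ℝ)) * (∑ i, (γ i : ℝ))
        - (((ℓ : ℝ) - 1) / ((n : ℝ) - 1)) * (∑ i, (γ i : ℝ)))
    (a : Fin ℓ → ℕ → Fin n)
    (hdist : ∀ i j i' j', j ≤ γ i → j' ≤ γ i' → (i, j) ≠ (i', j') → a i j ≠ a i' j')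
    (p : Equiv.Perm (Fin n) → ℝ)
    (hpos : ∀ σ, 0 ≤ p σ) (hsum : ∑ σ, p σ = 1)
    (hconj : ∀ τ σ : Equiv.Perm (Fin n), p (τ⁻¹ * σ * τ) = p σ) :
    prob p {σ | ∀ i, ∀ j < γ i, σ (a i j) = a i (j + 1)}
      ≤ prob (fun _ : Equiv.Perm (Fin n) => ((n.factorial : ℝ))⁻¹)
          {σ | ∀ i, ∀ j < γ i, σ (a i j) = a i (j + 1)}
        / (1 - (1 / (n : ℝ)) * (∑ i, (γ i : ℝ))
            - (((ℓ : ℝ) - 1) / ((n : ℝ) - 1)) * (∑ i, (γ i : ℝ))) := by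
  let f : (Σ i, Fin (γ i + 1)) ↪ Fin n := ⟨fun s => a s.1 s.2, by
    rintro ⟨i, j⟩ ⟨i', j'⟩ h
    by_contra hne
    refine hdist i j i' j' (by omega) (by omega) (fun heq => hne ?_) h
    simp only [Prod.mk.injEq] at heq
    obtain ⟨rfl, hj⟩ := heq
    rw [Fin.ext hj]⟩
  let src : (Σ i, Fin (γ i)) ↪ Σ i, Fin (γ i + 1) :=
    Function.Embedding.sigmaMap (.refl _) fun i => Fin.castSuccEmb
  let tgt : (Σ i, Fin (γ i)) ↪ Σ i, Fin (γ i + 1) :=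
    Function.Embedding.sigmaMap (.refl _) fun i => Fin.succEmb _
  have hE : {σ : Equiv.Perm (Fin n) | ∀ i, ∀ j < γ i, σ (a i j) = a i (j + 1)}
      = pathEvent γ f := by
    ext σ
    exact ⟨fun h s => h s.1 s.2 s.2.2, fun h i j hj => h ⟨i, ⟨j, hj⟩⟩⟩
  set G := ∑ i, γ i with hG
  have hGcast : ∑ i, (γ i : ℝ) = (G : ℝ) := by rw [hG]; push_cast; rfl
  have hG1 : 1 ≤ G :=
    (hγ ⟨0, hℓ⟩).trans (Finset.single_le_sum (fun i _ => Nat.zero_le (γ i)) (Finset.mem_univ _))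
  have hcardV : Fintype.card (Σ i, Fin (γ i + 1)) = ℓ + G := by
    simp [Finset.sum_add_distrib, hG, add_comm]
  have hcardE : Fintype.card (Σ i, Fin (γ i)) = G := by simp [hG]
  have h1 := descFactorial_mul_prob_le γ f p hpos hsum hconj
  have h2 := prob_uniform (src.trans f) (tgt.trans f)
  have hE' : {σ : Equiv.Perm (Fin n) | ∀ i, σ ((src.trans f) i) = (tgt.trans f) i}
      = pathEvent γ f := rfl
  rw [hE', hcardE] at h2
  rw [hcardV] at h1
  have h3 := descFactorial_bound hG1 hℓ hn
  rw [hGcast] at hden ⊢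
  rw [hE, le_div_iff₀ hden]
  set D := 1 - (1 / (n : ℝ)) * (G : ℝ) - (((ℓ : ℝ) - 1) / ((n : ℝ) - 1)) * (G : ℝ)
  set P := prob p (pathEvent γ f)
  set U := prob (fun _ : Equiv.Perm (Fin n) => ((n.factorial : ℝ))⁻¹) (pathEvent γ f)
  have hsplit : (n.descFactorial (ℓ + G) : ℝ)
      = (n - G).descFactorial ℓ * n.descFactorial G := by
    have := Nat.descFactorial_mul_descFactorial (n := n) (Nat.le_add_left G ℓ)
    rw [Nat.add_sub_cancel] at this
    exact_mod_cast this.symm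
  rw [hsplit] at h1
  have hP : 0 ≤ P := Finset.sum_nonneg fun σ _ => Set.indicator_nonneg (fun x _ => hpos x) σ
  have hA : (0 : ℝ) < n.descFactorial ℓ := by
    exact_mod_cast Nat.pos_of_ne_zero (by rw [Ne, Nat.descFactorial_eq_zero_iff_lt]; omega)
  have hB : (0 : ℝ) < n.descFactorial G := by
    exact_mod_cast Nat.pos_of_ne_zero (by rw [Ne, Nat.descFactorial_eq_zero_iff_lt]; omega)
  refine le_of_mul_le_mul_left ?_ (mul_pos hA hB)
  calc (n.descFactorial ℓ * n.descFactorial G : ℝ) * (P * D)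
      = (D * n.descFactorial ℓ) * (n.descFactorial G * P) := by ring
    _ ≤ (n - G).descFactorial ℓ * (n.descFactorial G * P) := by gcongr
    _ = (n - G).descFactorial ℓ * n.descFactorial G * P := by ring
    _ ≤ n.descFactorial ℓ := h1
    _ = n.descFactorial ℓ * (n.descFactorial G * U) := by rw [h2, mul_one]
    _ = _ := by ring
end
end

section
/- Let ℓ ≥ 1, ℓ′ ≥ 1, γ = (γ_1,…,γ_ℓ) ∈ (ℕ*)^ℓ and γ′ = (γ′_1,…,γ′_{ℓ′}) ∈ (ℕ*)^{ℓ′}. There exists n_0 (depending only on γ and γ′) such that for all n ≥ n_0 the following holds: for any conjugation-invariant random permutation σ_n of {1,…,n}, any uniformly distributed permutation ρ_n of {1,…,n}, and any pairwise distinct points a_{i,j} ∈ {1,…,n} (1 ≤ i ≤ ℓ, 0 ≤ j ≤ γ_i) and b_{i,j} ∈ {1,…,n} (1 ≤ i ≤ ℓ′, 0 ≤ j < γ′_i), with E(a,b) := {σ ∈ S_n : σ(a_{i,j}) = a_{i,j+1} for all i,j with 0 ≤ j < γ_i, and σ(b_{i,j}) = b_{i,(j+1 mod γ′_i)} for all i,j}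 and A^{γ′} := {σ ∈ S_n : c_j(σ) = γ′_j for all 1 ≤ j ≤ ℓ′, and 1,…,ℓ′ lie in pairwise distinct cycles of σ}, one has: P(σ_n ∈ E(a,b)) · P(ρ_n ∈ A^{γ′}) ≤ 2 · P(ρ_n ∈ E(a,b)) · P(σ_n ∈ A^{γ′}). -/
/-!
For a permutation `σ`, let `N σ` be the number of ways to embed the prescribed cycles (of lengths
`γ'`, with base points) into the functional graph of `σ`. The proof averages each event over all
placements of its marked points. Since the law `p` of `σ` is conjugation invariant, every placement
has the same probability (`descFactorial_mul_prob`), so a probability times the number of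
placements equals the `p`-mean of the number of placements realised by `σ`.

* For the event `A` that the first `ℓ'` points lie in different cycles of lengths `γ'`, these are
  the marked points, and the number of placements realised by `σ` is exactly `N σ`, because a
  cycle is determined by its base point (`cycleEquiv`). Hence
  `n.descFactorial ℓ' * P(A) = E[N]`.
* For the event `E` that the given paths and cycles occur, the marked points are all vertices. A
  realised placement is determined by its cycles and by the `ℓ` starting points of its paths, so
  there are at most `N σ * n ^ ℓ` of them (`card_graph_le`). Hence
  `n.descFactorial (K + m + ℓ) * P(E) ≤ n ^ ℓ * E[N]`, where `K = ∑ γ'` and `m = ∑ γ`.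

For the uniform law, `E[N] = 1` and `n.descFactorial (K + m) * P(E) = 1`, because the event that a
uniform permutation extends a given injection of `k` points has probability
`1 / n.descFactorial k` (`descFactorial_mul_prob_extend`). The claim therefore reduces to
`n ^ ℓ ≤ 2 * (n - K - m).descFactorial ℓ`, which holds for large `n` by Bernoulli's inequality.
-/

noncomputable section

open Equiv

/-! ### Averaging over placements of marked points -/

/-- The symmetric group acts transitively on injections of a given finite type. -/
lemma exists_perm_comp {X : Type*} [Fintype X] {n : ℕ} (u v : X ↪ Fin n) :
    ∃ τ : Perm (Fin n), ∀ x, τ (u x) = v x := by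
  classical
  let e : {y // y ∈ Set.range u} ≃ {y // y ∈ Set.range v} :=
    (Equiv.ofInjective u u.injective).symm.trans (Equiv.ofInjective v v.injective)
  refine ⟨e.extendSubtype, fun x => ?_⟩
  rw [Equiv.extendSubtype_apply_of_mem e (u x) ⟨x, rfl⟩]
  have : (Equiv.ofInjective u u.injective).symm ⟨u x, ⟨x, rfl⟩⟩ = x :=
    Equiv.ofInjective_symm_apply u.injective x
  simp [e, this]

lemma sum_prob_eq {X : Type*} [Fintype X] {n : ℕ} (p : Perm (Fin n) → ℝ)
    (Q : Perm (Fin n) → X → Prop) :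
    ∑ f, prob p {σ | Q σ f} = ∑ σ, p σ * Nat.card {f // Q σ f} := by
  classical
  unfold prob
  rw [Finset.sum_comm]
  refine Finset.sum_congr rfl fun σ _ => ?_
  rw [Nat.card_eq_fintype_card, Fintype.card_subtype]
  simp [Set.indicator_apply, Finset.sum_ite, mul_comm]

/-- If an event about marked points is natural under simultaneous conjugation of the permutation
and relabelling of the points, its probability under a conjugation-invariant law times the number
of placements of the points is the mean number of placements for which it occurs. -/
lemma descFactorial_mul_prob_s17 {X : Type*} [Fintype X] {n : ℕ} (p : Perm (Fin n) → ℝ)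
    (hp : ∀ τ σ : Perm (Fin n), p (τ⁻¹ * σ * τ) = p σ)
    (Q : Perm (Fin n) → (X ↪ Fin n) → Prop)
    (hQ : ∀ τ σ f, Q σ f → Q (τ * σ * τ⁻¹) (f.trans τ.toEmbedding)) (f₀ : X ↪ Fin n) :
    (n.descFactorial (Fintype.card X) : ℝ) * prob p {σ | Q σ f₀} =
      ∑ σ, p σ * Nat.card {f // Q σ f} := by
  classical
  rw [← sum_prob_eq]
  have hconst : ∀ f, prob p {σ | Q σ f} = prob p {σ | Q σ f₀} := by
    intro f
    obtain ⟨τ, hτ⟩ := exists_perm_comp f f₀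
    have hf : f.trans τ.toEmbedding = f₀ := by ext x; simp [hτ]
    have hf' : f₀.trans (τ⁻¹).toEmbedding = f := by
      ext x; simp [← hτ]
    unfold prob
    refine Fintype.sum_equiv (MulAut.conj τ).toEquiv _ _ fun σ => ?_
    have h1 : Q σ f ↔ Q (τ * σ * τ⁻¹) f₀ := by
      constructor
      · intro h; have := hQ τ σ f h; rwa [hf] at this
      · intro h
        have := hQ τ⁻¹ _ f₀ h
        rw [hf'] at this
        simpa [mul_assoc] using this
    have h2 : p (τ * σ * τ⁻¹) = p σ := by simpa using hp τ⁻¹ σ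
    simp [Set.indicator_apply, h1, h2]
  rw [Finset.sum_congr rfl fun f _ => hconst f]
  simp [Fintype.card_embedding_eq]

/-- A uniform permutation extends a given injection between `k`-point sets with probability
`1 / n.descFactorial k`: the possible images of the points are equally likely. -/
lemma descFactorial_mul_prob_extend {X : Type*} [Fintype X] {n : ℕ} (u v : X ↪ Fin n) :
    (n.descFactorial (Fintype.card X) : ℝ) *
      prob (fun _ : Perm (Fin n) => ((n.factorial : ℝ))⁻¹) {σ | ∀ x, σ (u x) = v x} = 1 := by
  classical
  have hsum := sum_prob_eq (fun _ : Perm (Fin n) => ((n.factorial : ℝ))⁻¹)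
    (fun σ (w : X ↪ Fin n) => ∀ x, σ (u x) = w x)
  have hconst : ∀ w : X ↪ Fin n,
      prob (fun _ : Perm (Fin n) => ((n.factorial : ℝ))⁻¹) {σ | ∀ x, σ (u x) = w x} =
      prob (fun _ : Perm (Fin n) => ((n.factorial : ℝ))⁻¹) {σ | ∀ x, σ (u x) = v x} := by
    intro w
    obtain ⟨τ, hτ⟩ := exists_perm_comp w v
    unfold prob
    refine Fintype.sum_equiv (Equiv.mulLeft τ) _ _ fun σ => ?_
    have h1 : (∀ x, σ (u x) = w x) ↔ ∀ x, τ (σ (u x)) = v x := by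
      refine forall_congr' fun x => ?_
      rw [← hτ x, τ.injective.eq_iff]
    simp only [Set.indicator_apply, Set.mem_ofPred_eq]
    exact if_congr h1 rfl rfl
  have hone : ∀ σ : Perm (Fin n), Nat.card {w : X ↪ Fin n // ∀ x, σ (u x) = w x} = 1 := by
    intro σ
    rw [Nat.card_eq_one_iff_unique]
    refine ⟨⟨fun w w' => ?_⟩, ⟨⟨u.trans σ.toEmbedding, fun x => by simp⟩⟩⟩
    ext x
    rw [← w.2 x, ← w'.2 x]
  rw [Finset.sum_congr rfl fun f _ => hconst f] at hsum
  simp only [hone] at hsum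
  simpa [Fintype.card_embedding_eq, Fintype.card_perm, Nat.factorial_ne_zero] using hsum

/-! ### Cycles and their base points -/

section Graph

variable {ℓ ℓ' n : ℕ} (γ : Fin ℓ → ℕ) (γ' : Fin ℓ' → ℕ)

/-- The successor of `j` in `{0, …, k - 1}`, cyclically. -/
def nxt {k : ℕ} (j : Fin k) : Fin k := ⟨(j + 1) % k, Nat.mod_lt _ (Nat.zero_lt_of_lt j.2)⟩

lemma nxt_injective {k : ℕ} : Function.Injective (nxt (k := k)) := by
  intro i j h
  have h' : ((i : ℕ) + 1) % k = ((j : ℕ) + 1) % k := congrArg Fin.val h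
  have h2 : (i : ℕ) % k = (j : ℕ) % k := Nat.ModEq.add_right_cancel' 1 h'
  rw [Nat.mod_eq_of_lt i.2, Nat.mod_eq_of_lt j.2] at h2
  exact Fin.ext h2

/-- The functional graph of `σ` contains the cycles with vertices `g ⟨i, 0⟩, g ⟨i, 1⟩, …`. -/
def HasCycles (σ : Perm (Fin n)) (g : (Σ i, Fin (γ' i)) ↪ Fin n) : Prop :=
  ∀ i (j : Fin (γ' i)), σ (g ⟨i, j⟩) = g ⟨i, nxt j⟩

/-- The points `h 0, h 1, …` lie in different cycles of `σ`, of lengths `γ' 0, γ' 1, …`. -/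
def HasCycleType (σ : Perm (Fin n)) (h : Fin ℓ' ↪ Fin n) : Prop :=
  (∀ j, cycLen σ (h j) = γ' j) ∧ ∀ j j', j ≠ j' → ¬ σ.SameCycle (h j) (h j')

variable {γ'}

lemma HasCycles.iterate {σ : Perm (Fin n)} {g : (Σ i, Fin (γ' i)) ↪ Fin n}
    (hg : HasCycles γ' σ g) (hγ' : ∀ i, 1 ≤ γ' i) (i : Fin ℓ') (j : ℕ) :
    σ^[j] (g ⟨i, ⟨0, hγ' i⟩⟩) = g ⟨i, ⟨j % γ' i, Nat.mod_lt _ (hγ' i)⟩⟩ := by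
  induction j with
  | zero => simp
  | succ j ih =>
    rw [Function.iterate_succ_apply', ih, hg]
    simp [nxt]

lemma HasCycles.hasCycleType {σ : Perm (Fin n)} {g : (Σ i, Fin (γ' i)) ↪ Fin n}
    (hg : HasCycles γ' σ g) (hγ' : ∀ i, 1 ≤ γ' i) :
    HasCycleType γ' σ ⟨fun i => g ⟨i, ⟨0, hγ' i⟩⟩, fun i i' h => by
      simpa using congrArg Sigma.fst (g.injective h)⟩ := by
  refine ⟨fun i => ?_, fun i i' hne hs => ?_⟩
  · have hper : Function.IsPeriodicPt σ (γ' i) (g ⟨i, ⟨0, hγ' i⟩⟩) := by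
      have := hg.iterate hγ' i (γ' i)
      simpa [Function.IsPeriodicPt, Function.IsFixedPt] using this
    apply le_antisymm (hper.minimalPeriod_le (hγ' i))
    -- a shorter positive period would identify two vertices of the embedded cycle
    by_contra! hlt
    have hpos : 0 < Function.minimalPeriod σ (g ⟨i, ⟨0, hγ' i⟩⟩) :=
      hper.minimalPeriod_pos (hγ' i)
    have h1 := hg.iterate hγ' i (Function.minimalPeriod σ (g ⟨i, ⟨0, hγ' i⟩⟩))
    rw [Function.iterate_minimalPeriod] at h1
    have h2 := g.injective h1
    simp only [Sigma.mk.injEq, heq_eq_eq, true_and, Fin.mk.injEq] at h2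
    change Function.minimalPeriod σ (g ⟨i, ⟨0, hγ' i⟩⟩) < γ' i at hlt
    rw [Nat.mod_eq_of_lt hlt] at h2
    omega
  · obtain ⟨k, -, hk⟩ := hs.exists_pow_eq'
    rw [Perm.coe_pow] at hk
    have h1 := (hg.iterate hγ' i k).symm.trans hk
    exact hne (congrArg Sigma.fst (g.injective h1))

lemma HasCycleType.injective {σ : Perm (Fin n)} {h : Fin ℓ' ↪ Fin n}
    (hh : HasCycleType γ' σ h) :
    Function.Injective fun x : (Σ i, Fin (γ' i)) => σ^[x.2] (h x.1) := by
  rintro ⟨i, j⟩ ⟨i', j'⟩ he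
  dsimp only at he
  have hs : σ.SameCycle (h i) (h i') := by
    rw [← Perm.coe_pow, ← Perm.coe_pow] at he
    exact (Perm.sameCycle_pow_right.1 (he.sameCycle σ)).of_pow_left
  obtain rfl : i = i' := by
    by_contra hne
    exact hh.2 i i' hne hs
  have hl : Function.minimalPeriod σ (h i) = γ' i := hh.1 i
  have := Function.iterate_injOn_Iio_minimalPeriod (f := σ) (x := h i)
    (by simp [hl]) (by simp [hl]) he
  rw [Fin.ext this]

/-- Embeddings of the cycles into the graph of `σ` correspond to choices of base points in
different cycles of the right lengths; the inverse follows the orbits of the base points. -/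
def cycleEquiv (σ : Perm (Fin n)) (hγ' : ∀ i, 1 ≤ γ' i) :
    {g // HasCycles γ' σ g} ≃ {h // HasCycleType γ' σ h} where
  toFun g := ⟨_, g.2.hasCycleType hγ'⟩
  invFun h := ⟨⟨_, h.2.injective⟩, fun i j => by
    have hl : Function.minimalPeriod σ (h.1 i) = γ' i := h.2.1 i
    have := Function.iterate_mod_minimalPeriod_eq (f := σ) (x := h.1 i) (n := j + 1)
    rw [hl] at this
    simpa [nxt, Function.iterate_succ_apply'] using this.symm⟩
  left_inv g := by
    ext ⟨i, j⟩
    have := g.2.iterate hγ' i j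
    simp only [Nat.mod_eq_of_lt j.2] at this
    exact congrArg Fin.val this
  right_inv h := by
    ext i
    simp

/-! ### Paths together with cycles -/

variable (γ')

/-- The vertices of a graph made of paths with `γ i` edges and cycles of lengths `γ' i`. -/
abbrev Vert := (Σ i, Fin (γ i + 1)) ⊕ (Σ i, Fin (γ' i))

/-- The functional graph of `σ` contains the paths and the cycles through the points `f`. -/
def HasGraph (σ : Perm (Fin n)) (f : Vert γ γ' ↪ Fin n) : Prop :=
  (∀ i (j : Fin (γ i)), σ (f (.inl ⟨i, j.castSucc⟩)) = f (.inl ⟨i, j.succ⟩)) ∧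
    HasCycles γ' σ (Function.Embedding.inr.trans f)

/-- A realised placement of the graph is determined by its cycles and the starting points of its
paths. -/
lemma card_graph_le (σ : Perm (Fin n)) :
    Nat.card {f // HasGraph γ γ' σ f} ≤ Nat.card {g // HasCycles γ' σ g} * n ^ ℓ := by
  have hc : n ^ ℓ = Nat.card (Fin ℓ → Fin n) := by simp
  rw [hc, ← Nat.card_prod]
  refine Nat.card_le_card_of_injective
    (fun f => (⟨_, f.2.2⟩, fun i => f.1 (.inl ⟨i, 0⟩))) ?_
  rintro ⟨f, hf⟩ ⟨f', hf'⟩ he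
  simp only [Prod.mk.injEq, Subtype.mk.injEq] at he
  ext x
  congr 1
  rcases x with ⟨i, j⟩ | x
  · induction j using Fin.induction with
    | zero => exact congrFun he.2 i
    | succ j ih =>
      dsimp only at ih ⊢
      rw [← hf.1, ← hf'.1, ih]
  · exact DFunLike.congr_fun he.1 x

/-- The starting vertices of the edges of the graph. -/
def edgeSource : (Σ i, Fin (γ i)) ⊕ (Σ i, Fin (γ' i)) ↪ Vert γ γ' where
  toFun := Sum.map (fun x => ⟨x.1, x.2.castSucc⟩) id
  inj' := by
    refine Function.Injective.sumMap ?_ Function.injective_id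
    rintro ⟨i, j⟩ ⟨i', j'⟩ h
    simp only [Sigma.mk.injEq] at h
    obtain ⟨rfl, h⟩ := h
    simpa using h

/-- The end vertices of the edges of the graph. -/
def edgeTarget : (Σ i, Fin (γ i)) ⊕ (Σ i, Fin (γ' i)) ↪ Vert γ γ' where
  toFun := Sum.map (fun x => ⟨x.1, x.2.succ⟩) (fun x => ⟨x.1, nxt x.2⟩)
  inj' := by
    refine Function.Injective.sumMap ?_ ?_
    · rintro ⟨i, j⟩ ⟨i', j'⟩ h
      simp only [Sigma.mk.injEq] at h
      obtain ⟨rfl, h⟩ := h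
      simpa using h
    · rintro ⟨i, j⟩ ⟨i', j'⟩ h
      simp only [Sigma.mk.injEq] at h
      obtain ⟨rfl, h⟩ := h
      simpa using nxt_injective (eq_of_heq h)

lemma hasGraph_iff (σ : Perm (Fin n)) (f : Vert γ γ' ↪ Fin n) :
    HasGraph γ γ' σ f ↔
      ∀ x, σ ((edgeSource γ γ').trans f x) = (edgeTarget γ γ').trans f x := by
  simp [HasGraph, HasCycles, Sum.forall, Sigma.forall, edgeSource, edgeTarget]

/-! ### Means and probabilities -/

variable {γ γ'}

lemma prob_hasCycleType (p : Perm (Fin n) → ℝ)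
    (hp : ∀ τ σ : Perm (Fin n), p (τ⁻¹ * σ * τ) = p σ) (hγ' : ∀ i, 1 ≤ γ' i)
    (h : Fin ℓ' ↪ Fin n) :
    (n.descFactorial ℓ' : ℝ) * prob p {σ | HasCycleType γ' σ h} =
      ∑ σ, p σ * Nat.card {g // HasCycles γ' σ g} := by
  have key := descFactorial_mul_prob_s17 p hp (HasCycleType γ') (fun τ σ f hf => by
    refine ⟨fun j => ?_, fun j j' hne hs => hf.2 j j' hne ?_⟩
    · rw [← hf.1 j]
      have hs : Function.Semiconj τ σ ⇑(τ * σ * τ⁻¹) := fun x => by simp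
      have hs' : Function.Semiconj ⇑τ⁻¹ ⇑(τ * σ * τ⁻¹) σ := fun x => by simp
      refine Nat.dvd_antisymm ?_ ?_ <;> refine Function.IsPeriodicPt.minimalPeriod_dvd ?_
      · exact (Function.isPeriodicPt_minimalPeriod σ (f j)).map hs
      · simpa [cycLen] using (Function.isPeriodicPt_minimalPeriod ⇑(τ * σ * τ⁻¹) (τ (f j))).map hs'
    · simpa [Perm.sameCycle_conj] using hs) h
  rw [Fintype.card_fin] at key
  rw [key]
  exact Finset.sum_congr rfl fun σ _ => by rw [Nat.card_congr (cycleEquiv σ hγ')]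

lemma hasCycles_conj (τ σ : Perm (Fin n)) (g : (Σ i, Fin (γ' i)) ↪ Fin n)
    (hg : HasCycles γ' σ g) : HasCycles γ' (τ * σ * τ⁻¹) (g.trans τ.toEmbedding) := by
  intro i j
  simp [hg i j]

lemma prob_hasGraph_le (p : Perm (Fin n) → ℝ) (hp0 : ∀ σ, 0 ≤ p σ)
    (hp : ∀ τ σ : Perm (Fin n), p (τ⁻¹ * σ * τ) = p σ) (f : Vert γ γ' ↪ Fin n) :
    (n.descFactorial (Fintype.card (Vert γ γ')) : ℝ) * prob p {σ | HasGraph γ γ' σ f} ≤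
      (n : ℝ) ^ ℓ * ∑ σ, p σ * Nat.card {g // HasCycles γ' σ g} := by
  rw [descFactorial_mul_prob_s17 p hp (HasGraph γ γ') (fun τ σ f hf =>
    ⟨fun i j => by simp [hf.1 i j], hasCycles_conj τ σ _ hf.2⟩) f, Finset.mul_sum]
  refine Finset.sum_le_sum fun σ _ => ?_
  have : (Nat.card {f // HasGraph γ γ' σ f} : ℝ) ≤
      Nat.card {g // HasCycles γ' σ g} * (n : ℝ) ^ ℓ := by
    exact_mod_cast card_graph_le γ γ' σ
  calc _ ≤ p σ * (Nat.card {g // HasCycles γ' σ g} * (n : ℝ) ^ ℓ) :=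
        mul_le_mul_of_nonneg_left this (hp0 σ)
    _ = _ := by ring

/-- The mean number of embeddings of the cycles into a uniform permutation is `1`, provided one
placement of the vertices exists. -/
lemma mean_uniform (g : (Σ i, Fin (γ' i)) ↪ Fin n) :
    ∑ σ : Perm (Fin n), ((n.factorial : ℝ))⁻¹ * Nat.card {g // HasCycles γ' σ g} = 1 := by
  rw [← descFactorial_mul_prob_s17 (fun _ => ((n.factorial : ℝ))⁻¹) (fun _ _ => rfl) (HasCycles γ')
    hasCycles_conj g]
  let s : (Σ i, Fin (γ' i)) ↪ Σ i, Fin (γ' i) :=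
    ⟨fun x => ⟨x.1, nxt x.2⟩, by
      rintro ⟨i, j⟩ ⟨i', j'⟩ h
      simp only [Sigma.mk.injEq] at h
      obtain ⟨rfl, h⟩ := h
      simpa using nxt_injective (eq_of_heq h)⟩
  have := descFactorial_mul_prob_extend g (s.trans g)
  have hs : {σ : Perm (Fin n) | HasCycles γ' σ g} = {σ | ∀ x, σ (g x) = s.trans g x} := by
    ext σ
    exact ⟨fun hσ x => hσ x.1 x.2, fun hσ i j => hσ ⟨i, j⟩⟩
  rwa [hs]

end Graph

/-! ### The final estimate -/

/-- Bernoulli's inequality: the descending factorial is at least `(n - s - ℓ) ^ ℓ`, hence at least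
`n ^ ℓ * (1 - ℓ * (s + ℓ) / n)`. -/
lemma pow_le_two_mul_descFactorial {ℓ s n : ℕ} (h1 : s + ℓ ≤ n)
    (h2 : 2 * ℓ * (s + ℓ) ≤ n) :
    (n : ℝ) ^ ℓ ≤ 2 * ((n - s).descFactorial ℓ : ℝ) := by
  rcases Nat.eq_zero_or_pos n with rfl | hn
  · obtain rfl : ℓ = 0 := by omega
    simp
  have hn' : (0 : ℝ) < n := by exact_mod_cast hn
  have h3 : ((n : ℝ) - (s + ℓ)) ^ ℓ ≤ ((n - s).descFactorial ℓ : ℝ) := by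
    have h4 : (n - (s + ℓ)) ^ ℓ ≤ (n - s).descFactorial ℓ :=
      (Nat.pow_le_pow_left (by omega) ℓ).trans (Nat.pow_sub_le_descFactorial (n - s) ℓ)
    have h5 : (((n - (s + ℓ) : ℕ) : ℝ)) ^ ℓ ≤ ((n - s).descFactorial ℓ : ℝ) := by
      exact_mod_cast h4
    rwa [Nat.cast_sub h1, Nat.cast_add] at h5
  have h1' : ((s : ℝ) + ℓ) / n ≤ 1 := by
    rw [div_le_one hn']; exact_mod_cast h1
  have hb := one_add_mul_le_pow (a := -(((s : ℝ) + ℓ) / n)) (by linarith) ℓ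
  have h2' : (ℓ : ℝ) * (((s : ℝ) + ℓ) / n) ≤ 1 / 2 := by
    rw [← mul_div_assoc, div_le_iff₀ hn']
    have : (2 * ℓ * (s + ℓ) : ℝ) ≤ n := by exact_mod_cast h2
    linarith
  have h6 : (n : ℝ) - (s + ℓ) = n * (1 + -(((s : ℝ) + ℓ) / n)) := by
    field_simp
    ring
  rw [h6, mul_pow] at h3
  have h7 : (1 : ℝ) / 2 ≤ (1 + -(((s : ℝ) + ℓ) / n)) ^ ℓ := by linarith
  have h8 := mul_le_mul_of_nonneg_left h7 (pow_nonneg hn'.le ℓ)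
  linarith

/-- There exists `n₀` depending only on `γ, γ'` such that for all `n ≥ n₀`, every
conjugation-invariant random permutation `σ_n`, uniform permutation `ρ_n` and every
graph of class `C_{γ,γ'}` (through pairwise distinct points `a`, `b`):
`P(σ_n ∈ E(a,b))·P(ρ_n ∈ A^{γ'}) ≤ 2·P(ρ_n ∈ E(a,b))·P(σ_n ∈ A^{γ'})`. -/
theorem conj_invariant_vs_uniform_with_cycles
    {ℓ ℓ' : ℕ} (hℓ : 1 ≤ ℓ) (hℓ' : 1 ≤ ℓ')
    (γ : Fin ℓ → ℕ) (hγ : ∀ i, 1 ≤ γ i)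
    (γ' : Fin ℓ' → ℕ) (hγ' : ∀ i, 1 ≤ γ' i) :
    ∃ n₀ : ℕ, ∀ n : ℕ, n₀ ≤ n → ∀ hℓ'n : ℓ' ≤ n,
      ∀ (a : Fin ℓ → ℕ → Fin n) (b : Fin ℓ' → ℕ → Fin n),
        (∀ i j i' j', j ≤ γ i → j' ≤ γ i' → (i, j) ≠ (i', j') → a i j ≠ a i' j') →
        (∀ i j i' j', j < γ' i → j' < γ' i' → (i, j) ≠ (i', j') → b i j ≠ b i' j') →
        (∀ i j i' j', j ≤ γ i → j' < γ' i' → a i j ≠ b i' j') →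
        ∀ (p : Equiv.Perm (Fin n) → ℝ),
          (∀ σ, 0 ≤ p σ) → (∑ σ, p σ = 1) →
          (∀ τ σ : Equiv.Perm (Fin n), p (τ⁻¹ * σ * τ) = p σ) →
          prob p {σ | (∀ i, ∀ j < γ i, σ (a i j) = a i (j + 1)) ∧
              (∀ i : Fin ℓ', ∀ j < γ' i, σ (b i j) = b i ((j + 1) % γ' i))}
            * prob (fun _ : Equiv.Perm (Fin n) => ((n.factorial : ℝ))⁻¹)
              {σ | (∀ j : Fin ℓ', cycLen σ (Fin.castLE hℓ'n j) = γ' j) ∧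
                ∀ j j' : Fin ℓ', j ≠ j' →
                  ¬ σ.SameCycle (Fin.castLE hℓ'n j) (Fin.castLE hℓ'n j')}
          ≤ 2 * prob (fun _ : Equiv.Perm (Fin n) => ((n.factorial : ℝ))⁻¹)
              {σ | (∀ i, ∀ j < γ i, σ (a i j) = a i (j + 1)) ∧
                (∀ i : Fin ℓ', ∀ j < γ' i, σ (b i j) = b i ((j + 1) % γ' i))}
            * prob p {σ | (∀ j : Fin ℓ', cycLen σ (Fin.castLE hℓ'n j) = γ' j) ∧
                ∀ j j' : Fin ℓ', j ≠ j' →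
                  ¬ σ.SameCycle (Fin.castLE hℓ'n j) (Fin.castLE hℓ'n j')} := by
  set K := ∑ i, γ' i with hK
  set m := ∑ i, γ i with hm
  -- the first summand makes all vertices fit, the second is what Bernoulli's inequality needs
  refine ⟨(K + m + ℓ) + 2 * ℓ * (K + m + ℓ), ?_⟩
  intro n hn hℓ'n a b ha hb hab p hp0 _ hp
  let f : Vert γ γ' ↪ Fin n :=
    ⟨Sum.elim (fun x => a x.1 x.2) (fun x => b x.1 x.2), by
      refine Function.Injective.sumElim ?_ ?_ ?_
      · rintro ⟨i, j⟩ ⟨i', j'⟩ h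
        by_contra hne
        refine ha i j i' j' (by omega) (by omega) (fun he => hne ?_) h
        obtain ⟨rfl, he⟩ := Prod.mk.inj he
        rw [Fin.ext he]
      · rintro ⟨i, j⟩ ⟨i', j'⟩ h
        by_contra hne
        refine hb i j i' j' j.2 j'.2 (fun he => hne ?_) h
        obtain ⟨rfl, he⟩ := Prod.mk.inj he
        rw [Fin.ext he]
      · rintro ⟨i, j⟩ ⟨i', j'⟩
        exact hab i j i' j' (by omega) j'.2⟩
  let h : Fin ℓ' ↪ Fin n := Fin.castLEEmb hℓ'n
  have hE : {σ : Perm (Fin n) | (∀ i, ∀ j < γ i, σ (a i j) = a i (j + 1)) ∧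
      (∀ i : Fin ℓ', ∀ j < γ' i, σ (b i j) = b i ((j + 1) % γ' i))} =
      {σ | HasGraph γ γ' σ f} := by
    ext σ
    simp [HasGraph, HasCycles, f, nxt, Fin.forall_iff]
  have hA : {σ : Perm (Fin n) | (∀ j : Fin ℓ', cycLen σ (Fin.castLE hℓ'n j) = γ' j) ∧
      ∀ j j' : Fin ℓ', j ≠ j' →
        ¬ σ.SameCycle (Fin.castLE hℓ'n j) (Fin.castLE hℓ'n j')} =
      {σ | HasCycleType γ' σ h} := rfl
  rw [hE, hA]
  have hcard : Fintype.card (Vert γ γ') = K + m + ℓ := by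
    simp [hK, hm, Finset.sum_add_distrib]; ring
  have hcard' : Fintype.card ((Σ i, Fin (γ i)) ⊕ (Σ i, Fin (γ' i))) = K + m := by
    simp [hK, hm]; ring
  have e1 := prob_hasGraph_le p hp0 hp f
  have e2 := prob_hasCycleType p hp hγ' h
  have e3 := prob_hasCycleType (fun _ => ((n.factorial : ℝ))⁻¹) (fun _ _ => rfl) hγ' h
  rw [mean_uniform (Function.Embedding.inr.trans f)] at e3
  have e4 := descFactorial_mul_prob_extend ((edgeSource γ γ').trans f) ((edgeTarget γ γ').trans f)
  simp only [← hasGraph_iff] at e4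
  rw [hcard] at e1
  rw [hcard'] at e4
  have e5 : (n.descFactorial (K + m + ℓ) : ℝ) =
      ((n - (K + m)).descFactorial ℓ : ℝ) * n.descFactorial (K + m) := by
    have := Nat.descFactorial_mul_descFactorial (n := n) (Nat.le_add_right (K + m) ℓ)
    rw [Nat.add_sub_cancel_left] at this
    exact_mod_cast this.symm
  have e6 := pow_le_two_mul_descFactorial (ℓ := ℓ) (s := K + m) (n := n) (by omega) (by omega)
  have hD1 : (0 : ℝ) < n.descFactorial (K + m + ℓ) := by
    exact_mod_cast Nat.descFactorial_pos.2 (by omega)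
  have hD2 : (0 : ℝ) < n.descFactorial ℓ' := by
    exact_mod_cast Nat.descFactorial_pos.2 hℓ'n
  have hM : (0 : ℝ) ≤ ∑ σ, p σ * Nat.card {g // HasCycles γ' σ g} :=
    Finset.sum_nonneg fun σ _ => mul_nonneg (hp0 σ) (Nat.cast_nonneg _)
  generalize prob p {σ | HasGraph γ γ' σ f} = x at *
  generalize prob p {σ | HasCycleType γ' σ h} = y at *
  generalize prob _ {σ | HasGraph γ γ' σ f} = u at *
  generalize prob _ {σ | HasCycleType γ' σ h} = v at *
  generalize (∑ σ, p σ * Nat.card {g // HasCycles γ' σ g} : ℝ) = M at *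
  -- compare after multiplying by the numbers of placements of both sets of marked points
  refine le_of_mul_le_mul_right ?_ (mul_pos hD1 hD2)
  calc x * v * (n.descFactorial (K + m + ℓ) * n.descFactorial ℓ')
      = (n.descFactorial (K + m + ℓ) * x) * (n.descFactorial ℓ' * v) := by ring
    _ = n.descFactorial (K + m + ℓ) * x := by rw [e3, mul_one]
    _ ≤ (n : ℝ) ^ ℓ * M := e1
    _ ≤ (2 * ((n - (K + m)).descFactorial ℓ : ℝ)) * M := mul_le_mul_of_nonneg_right e6 hM
    _ = 2 * ((n - (K + m)).descFactorial ℓ : ℝ) * (n.descFactorial (K + m) * u) *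
          (n.descFactorial ℓ' * y) := by rw [e4, e2, mul_one]
    _ = 2 * u * y * (n.descFactorial (K + m + ℓ) * n.descFactorial ℓ') := by rw [e5]; ring
end
end
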